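/- arXiv:2002.00870 — 2 statements merged into one kernel-verified Lean document; each statement's English description precedes it below -/
import Mathlib

section
/- Let h : 𝕊^{m-1} × ℝ^m → ℝ be continuous on 𝕊^{m-1} × (closed unit ball), such that for each ζ ∈ 𝕊^{m-1} the function ω ↦ h(ζ,ω) coincides on the closed unit ball with an element of ℋ_k. Then 𝒟_k P_B[h] = 0 in 𝔹^m × 𝔹^m, and for every ζ₀ ∈ 𝕊^{m-1} and every ν ∈ 𝔹^m, P_B[h](x,ν) → h(ζ₀,ν) as x → ζ₀ with x ∈ 𝔹^m; consequently the function h* on the closed unit ball defined by h*(x,ν) = P_B[h](x,ν) for x ∈ 𝔹^m and h*(x,ν) = h(x,ν) for x ∈ 𝕊^{m-1} is continuous in the x-variable on the closed unit ball, for each fixed ν ∈ 𝔹^m. -/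
noncomputable section

open MeasureTheory Metric Filter Topology
open scoped RealInnerProductSpace

/-- `ℝ^m` as a Euclidean space. -/
abbrev Evec (m : ℕ) : Type := EuclideanSpace ℝ (Fin m)

/-- Partial derivative in the `i`-th coordinate direction. -/
def pdv {m : ℕ} (i : Fin m) (f : Evec m → ℝ) (x : Evec m) : ℝ :=
  fderiv ℝ f x (EuclideanSpace.single i 1)

/-- Euclidean Laplacian on `ℝ^m`. -/
def lapl {m : ℕ} (f : Evec m → ℝ) (x : Evec m) : ℝ :=
  ∑ i : Fin m, pdv i (pdv i f) x

/-- `p` is a real-valued polynomial function on `ℝ^m`, homogeneous of degree `k` and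
harmonic; i.e. `p ∈ ℋ_k`. -/
def IsHk (m k : ℕ) (p : Evec m → ℝ) : Prop :=
  (∃ P : MvPolynomial (Fin m) ℝ, ∀ x : Evec m, p x = MvPolynomial.eval (fun i => x i) P) ∧
  (∀ (c : ℝ) (x : Evec m), p (c • x) = c ^ k * p x) ∧
  (∀ x : Evec m, lapl p x = 0)

/-- The surface measure `dS` on the unit sphere `𝕊^{m-1}`, as a measure on `ℝ^m`. -/
def sphereM (m : ℕ) : Measure (Evec m) :=
  Measure.map Subtype.val ((volume : Measure (Evec m)).toSphere)

/-- `ω_m`, the surface area of the unit sphere `𝕊^{m-1}`. -/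
def omegaS (m : ℕ) : ℝ := (sphereM m Set.univ).toReal

/-- The constant `c_{m,k} = 2(m+2k-2)/((m-2)ω_m)`. -/
def cmk (m k : ℕ) : ℝ := 2 * ((m : ℝ) + 2 * k - 2) / (((m : ℝ) - 2) * omegaS m)

/-- The reflection `R_a(u) = u - 2⟨a,u⟩a/|a|²` (in Clifford notation `a u a/|a|²`). -/
def reflv {m : ℕ} (a u : Evec m) : Evec m :=
  u - (2 * ⟪a, u⟫ / ‖a‖ ^ 2) • a

/-- `dim ℋ_k`. -/
def hdim (m k : ℕ) : ℕ :=
  Nat.choose (m + k - 1) (m - 1) - Nat.choose (m + k - 3) (m - 1)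

/-- `Z` is the reproducing kernel `Z_k` of `ℋ_k` on the unit sphere: a symmetric,
rotation invariant kernel, bounded by `dim ℋ_k` on the unit ball, belonging to `ℋ_k`
in the first variable and reproducing elements of `ℋ_k` from their spherical values. -/
def IsZk (m k : ℕ) (Z : Evec m → Evec m → ℝ) : Prop :=
  (∀ v : Evec m, IsHk m k (fun u => Z u v)) ∧
  (∀ p : Evec m → ℝ, IsHk m k p → ∀ v : Evec m, (∫ u, Z u v * p u ∂(sphereM m)) = p v) ∧
  (∀ u v : Evec m, Z u v = Z v u) ∧
  (∀ u v : Evec m, ‖u‖ ≤ 1 → ‖v‖ ≤ 1 → |Z u v| ≤ (hdim m k : ℝ)) ∧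
  (∀ (A : Evec m ≃ₗᵢ[ℝ] Evec m) (u v : Evec m), Z (A u) (A v) = Z u v)

/-- The point `(x', y) ∈ ℝ^{d+1}` with first `d` coordinates `x'` and last coordinate `y`. -/
def upP (d : ℕ) (x' : Evec d) (y : ℝ) : Evec (d + 1) :=
  (EuclideanSpace.equiv (Fin (d + 1)) ℝ).symm
    (Fin.snoc (⇑(EuclideanSpace.equiv (Fin d) ℝ) x') y)

/-- The first `d` coordinates of a point of `ℝ^{d+1}`. -/
def downP (d : ℕ) (x : Evec (d + 1)) : Evec d :=
  (EuclideanSpace.equiv (Fin d) ℝ).symm (fun i => x (Fin.castSucc i))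

/-- The last coordinate of a point of `ℝ^{d+1}`. -/
def lastP (d : ℕ) (x : Evec (d + 1)) : ℝ := x (Fin.last d)

/-- The Poisson kernel `P_H` for bosonic Laplacians in the upper half-space `ℝ^{d+1}_+`,
`P_H(x,t,u,v) = c_{m,k} (y/|x-t|^m) Z_k(R_{x-t}(u), v)` with `m = d+1`, `x = (x',y)`,
`t = (t',0)`. -/
def PH (d k : ℕ) (Z : Evec (d + 1) → Evec (d + 1) → ℝ) (x' : Evec d) (y : ℝ)
    (t' : Evec d) (u v : Evec (d + 1)) : ℝ :=
  cmk (d + 1) k * (y / ‖upP d x' y - upP d t' 0‖ ^ (d + 1)) *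
    Z (reflv (upP d x' y - upP d t' 0) u) v

/-- The Poisson integral `P_H[f]` in the upper half-space. -/
def PHint (d k : ℕ) (Z : Evec (d + 1) → Evec (d + 1) → ℝ)
    (f : Evec d → Evec (d + 1) → ℝ) (x' : Evec d) (y : ℝ) (v : Evec (d + 1)) : ℝ :=
  ∫ t' : Evec d, (∫ u, PH d k Z x' y t' u v * f t' u ∂(sphereM (d + 1)))

/-- The Poisson kernel `P_B` for bosonic Laplacians in the unit ball. -/
def PB (m k : ℕ) (Z : Evec m → Evec m → ℝ) (x ζ ω ν : Evec m) : ℝ :=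
  (cmk m k / 2) * ((1 - ‖x‖ ^ 2) / ‖x - ζ‖ ^ m) * Z (reflv (x - ζ) ω) ν

/-- The Poisson integral `P_B[h]` in the unit ball. -/
def PBint (m k : ℕ) (Z : Evec m → Evec m → ℝ) (h : Evec m → Evec m → ℝ)
    (x ν : Evec m) : ℝ :=
  ∫ ζ, (∫ ω, PB m k Z x ζ ω ν * h ζ ω ∂(sphereM m)) ∂(sphereM m)

/-- Partial derivative in the first (`x`) variable. -/
def pd1 {m : ℕ} (i : Fin m) (f : Evec m → Evec m → ℝ) : Evec m → Evec m → ℝ :=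
  fun x u => fderiv ℝ (fun x₁ => f x₁ u) x (EuclideanSpace.single i 1)

/-- Partial derivative in the second (`u`) variable. -/
def pd2 {m : ℕ} (i : Fin m) (f : Evec m → Evec m → ℝ) : Evec m → Evec m → ℝ :=
  fun x u => fderiv ℝ (fun u₁ => f x u₁) u (EuclideanSpace.single i 1)

/-- The bosonic Laplacian `𝒟_k`. -/
def Dk (m k : ℕ) (f : Evec m → Evec m → ℝ) : Evec m → Evec m → ℝ := fun x u =>
  (∑ i : Fin m, pd1 i (pd1 i f) x u)
    - (4 / ((m : ℝ) + 2 * k - 2)) *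
        ∑ i : Fin m, ∑ j : Fin m, u i * pd1 i (pd2 j (pd1 j f)) x u
    + (4 * ‖u‖ ^ 2 / (((m : ℝ) + 2 * k - 2) * ((m : ℝ) + 2 * k - 4))) *
        ∑ i : Fin m, ∑ j : Fin m, pd2 i (pd1 i (pd2 j (pd1 j f))) x u

/-- `f ∈ C²(Ω×𝔹^m, ℋ_k)`: twice continuously differentiable on `Ω × 𝔹^m` and, for each
fixed `x ∈ Ω`, coinciding in the second variable with an element of `ℋ_k`. -/
def C2Hk (m k : ℕ) (Ω : Set (Evec m)) (f : Evec m → Evec m → ℝ) : Prop :=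
  ContDiffOn ℝ 2 (fun q : Evec m × Evec m => f q.1 q.2) (Ω ×ˢ ball (0 : Evec m) 1) ∧
  ∀ x ∈ Ω, ∃ q, IsHk m k q ∧ ∀ u ∈ closedBall (0 : Evec m) 1, f x u = q u

/-- The `L^p` norm `(∫_{ℝ^{m-1}} ∫_{𝕊^{m-1}} |f(x',u)|^p dS(u) dx')^{1/p}` (`m = d+1`),
valued in `ℝ≥0∞`. -/
def lpH (d : ℕ) (p : ℝ) (f : Evec d → Evec (d + 1) → ℝ) : ENNReal :=
  (∫⁻ x' : Evec d, ∫⁻ u, ENNReal.ofReal (|f x' u| ^ p) ∂(sphereM (d + 1))) ^ (1 / p)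

/-- `f ∈ L^p(ℝ^{m-1}×𝔹^m, ℋ_k)` (`m = d+1`). -/
def MemLpH (d k : ℕ) (p : ℝ) (f : Evec d → Evec (d + 1) → ℝ) : Prop :=
  Measurable (fun q : Evec d × Evec (d + 1) => f q.1 q.2) ∧
  (∀ x' : Evec d, ∃ q, IsHk (d + 1) k q ∧
    ∀ u ∈ closedBall (0 : Evec (d + 1)) 1, f x' u = q u) ∧
  lpH d p f < ⊤

/-- The `L^p` norm `(∫_{𝕊^{m-1}} ∫_{𝕊^{m-1}} |h(ζ,ω)|^p dS(ω) dS(ζ))^{1/p}`,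
valued in `ℝ≥0∞`. -/
def lpS (m : ℕ) (p : ℝ) (h : Evec m → Evec m → ℝ) : ENNReal :=
  (∫⁻ ζ, ∫⁻ ω, ENNReal.ofReal (|h ζ ω| ^ p) ∂(sphereM m) ∂(sphereM m)) ^ (1 / p)

/-- `h ∈ L^p(𝕊^{m-1}×𝔹^m, ℋ_k)`. -/
def MemLpS (m k : ℕ) (p : ℝ) (h : Evec m → Evec m → ℝ) : Prop :=
  Measurable (fun q : Evec m × Evec m => h q.1 q.2) ∧
  (∀ ζ : Evec m, ‖ζ‖ = 1 → ∃ q, IsHk m k q ∧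
    ∀ ω ∈ closedBall (0 : Evec m) 1, h ζ ω = q ω) ∧
  lpS m p h < ⊤

/-- Iterated partial derivative `D_x^α` in the first variable, for a multi-index `α ∈ ℕ^m`. -/
def Dx {m : ℕ} (α : Fin m → ℕ) (f : Evec m → Evec m → ℝ) : Evec m → Evec m → ℝ :=
  (List.finRange m).foldr (fun i g => (pd1 i)^[α i] g) f

/-- Iterated partial derivative `D_ν^β` in the second variable, for a multi-index `β ∈ ℕ^m`. -/
def Dv {m : ℕ} (β : Fin m → ℕ) (f : Evec m → Evec m → ℝ) : Evec m → Evec m → ℝ :=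
  (List.finRange m).foldr (fun i g => (pd2 i)^[β i] g) f

/-! Elements of `ℋ_k` are recovered from finitely many values in the ball, so `h` is a finite sum
of products `h(ζ, vᵢ) eᵢ(ω)`. Reproduction and rotation invariance of `Z_k` carry out the inner
integral and turn `P_B[h]` into a superposition over `ζ` of the kernels
`(1 - |x|²) |x - ζ|^{-m} q(R_{x-ζ} ν)` with `q ∈ ℋ_k`.

For `|ζ| = 1` the factor `1 - |x|²` is `-|y|² - 2⟨ζ, y⟩` in `y = x - ζ`, so each kernel is a
translate of `(α|y|² + ⟨b, y⟩) |y|^{-m} q(R_y ν)`. Such functions are annihilated by `𝒟_k`, and `𝒟_k` may be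
applied under the integral sign.

For the boundary values, the mean of `q(R_z ν)` over `z` in the sphere is a multiple of `q(ν)`. The
projection of the sphere through `x` onto directions carries the scalar Poisson kernel to the
surface measure up to the symmetry `z ↦ -z`; as `R_{-z} = R_z`, the kernels above also integrate to
that multiple of `q(ν)` for every `x`, and the scalar Poisson kernel is an approximate identity. -/

namespace BosonicPoisson

open scoped ContDiff Laplacian

variable {m : ℕ}

section Basis

/-- The `j`-th standard basis vector of `ℝ^m`. -/
abbrev ev (j : Fin m) : Evec m := EuclideanSpace.single j 1

lemma inner_ev (a : Evec m) (j : Fin m) : ⟪a, ev j⟫ = a j := by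
  simp [EuclideanSpace.inner_single_right]

lemma inner_ev_self (j : Fin m) : ⟪ev j, ev j⟫ = 1 := by
  simp

lemma sum_inner_ev_smul (a : Evec m) : ∑ j, ⟪a, ev j⟫ • ev j = a := by
  simpa [real_inner_comm] using (EuclideanSpace.basisFun (Fin m) ℝ).sum_repr' a

lemma sum_inner_ev_smul_map {F : Type*} [NormedAddCommGroup F] [NormedSpace ℝ F]
    (L : Evec m →L[ℝ] F) (a : Evec m) : ∑ j, ⟪a, ev j⟫ • L (ev j) = L a := by
  conv_rhs => rw [← sum_inner_ev_smul a, map_sum]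
  simp only [map_smul]

lemma sum_inner_ev_mul_map (L : Evec m →L[ℝ] ℝ) (a : Evec m) :
    ∑ j, ⟪a, ev j⟫ * L (ev j) = L a :=
  sum_inner_ev_smul_map L a

lemma sum_inner_ev_mul_inner_ev (a b : Evec m) : ∑ j, ⟪a, ev j⟫ * ⟪b, ev j⟫ = ⟪a, b⟫ := by
  simpa [real_inner_comm] using sum_inner_ev_mul_map (innerSL ℝ b) a

end Basis

section HarmonicFunctions

variable {E F : Type*} [NormedAddCommGroup E] [NormedSpace ℝ E] [NormedAddCommGroup F]
  [NormedSpace ℝ F]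

lemma fderiv_apply_eq_of_curves {f : E → F} {x v : E} {d : F} (hf : DifferentiableAt ℝ f x)
    (h : ∀ X : ℝ → E, X 0 = x → HasDerivAt X v 0 → HasDerivAt (fun t => f (X t)) d 0) :
    fderiv ℝ f x v = d := by
  have hX : HasDerivAt (fun t : ℝ => x + t • v) v 0 := by
    simpa using ((hasDerivAt_id (0 : ℝ)).smul_const v).const_add x
  have hfX : HasFDerivAt f (fderiv ℝ f x) (x + (0 : ℝ) • v) := by simpa using hf.hasFDerivAt
  exact (hfX.comp_hasDerivAt 0 hX).unique (h _ (by simp) hX)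

lemma contDiff_fderiv {q : E → F} (hq : ContDiff ℝ ∞ q) : ContDiff ℝ ∞ (fderiv ℝ q) :=
  hq.fderiv_right (by simp)

lemma hess_symm {q : E → ℝ} (hq : ContDiff ℝ ∞ q) (y a b : E) :
    fderiv ℝ (fderiv ℝ q) y a b = fderiv ℝ (fderiv ℝ q) y b a :=
  (hq.contDiffAt.isSymmSndFDerivAt
    (by simpa using WithTop.coe_le_coe.2 (le_top : (2 : ℕ∞) ≤ ⊤))).eq a b

/-- The directional derivative `∂_a q`, as a function of the base point. -/
def dirDeriv (a : E) (q : E → ℝ) (y : E) : ℝ := fderiv ℝ q y a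

lemma contDiff_dirDeriv {q : E → ℝ} (hq : ContDiff ℝ ∞ q) (a : E) :
    ContDiff ℝ ∞ (dirDeriv a q) :=
  (contDiff_fderiv hq).clm_apply contDiff_const

lemma fderiv_dirDeriv {q : E → ℝ} (hq : ContDiff ℝ ∞ q) (y a b : E) :
    fderiv ℝ (dirDeriv a q) y b = fderiv ℝ (fderiv ℝ q) y b a := by
  have hd : DifferentiableAt ℝ (fderiv ℝ q) y := (contDiff_fderiv hq).differentiable (by simp) y
  unfold dirDeriv
  rw [fderiv_clm_apply hd (differentiableAt_const a)]
  simp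

lemma dirDeriv_comm {q : E → ℝ} (hq : ContDiff ℝ ∞ q) (a b : E) :
    dirDeriv a (dirDeriv b q) = dirDeriv b (dirDeriv a q) := by
  funext y
  simp only [dirDeriv.eq_1 _ (dirDeriv _ q), fderiv_dirDeriv hq, hess_symm hq y a b]

lemma laplacian_eq_sum_hess (q : Evec m → ℝ) (b : OrthonormalBasis (Fin m) ℝ (Evec m))
    (y : Evec m) : Δ q y = ∑ j, fderiv ℝ (fderiv ℝ q) y (b j) (b j) := by
  rw [InnerProductSpace.laplacian_eq_iteratedFDeriv_orthonormalBasis q b]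
  simp [iteratedFDeriv_two_apply]

lemma laplacian_eq_lapl {q : Evec m → ℝ} (hq : ContDiff ℝ ∞ q) : Δ q = lapl q := by
  funext y
  rw [laplacian_eq_sum_hess q (EuclideanSpace.basisFun (Fin m) ℝ)]
  simp only [EuclideanSpace.basisFun_apply, ← fderiv_dirDeriv hq]
  rfl

lemma laplacian_dirDeriv {q : Evec m → ℝ} (hq : ContDiff ℝ ∞ q) (a : Evec m) :
    Δ (dirDeriv a q) = dirDeriv a (Δ q) := by
  have hd (j : Fin m) : ContDiff ℝ ∞ (dirDeriv (ev j) (dirDeriv (ev j) q)) :=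
    contDiff_dirDeriv (contDiff_dirDeriv hq _) _
  have hsum {q : Evec m → ℝ} (hq : ContDiff ℝ ∞ q) :
      Δ q = fun y => ∑ j, dirDeriv (ev j) (dirDeriv (ev j) q) y := laplacian_eq_lapl hq
  funext y
  rw [hsum (contDiff_dirDeriv hq a), hsum hq, dirDeriv.eq_1 a,
    fderiv_fun_sum fun j _ => (hd j).differentiable (by simp) y, sum_apply]
  refine Finset.sum_congr rfl fun j _ => ?_
  rw [dirDeriv_comm hq, dirDeriv_comm (contDiff_dirDeriv hq _)]
  rfl

variable {κ : ℝ} {q : Evec m → ℝ}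

/-- Smooth harmonic functions on `ℝ^m` satisfying Euler's relation of degree `κ`. The degree is
real, so that taking a derivative always lowers it by one. -/
structure HarmHom (κ : ℝ) (q : Evec m → ℝ) : Prop where
  contDiff : ContDiff ℝ ∞ q
  euler : ∀ y, fderiv ℝ q y y = κ * q y
  harmonic : ∀ y, Δ q y = 0

namespace HarmHom

lemma hess_trace (hq : HarmHom κ q) (y : Evec m) :
    ∑ j, fderiv ℝ (fderiv ℝ q) y (ev j) (ev j) = 0 := by
  simpa [hq.harmonic] using (laplacian_eq_sum_hess q (EuclideanSpace.basisFun (Fin m) ℝ) y).symm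

lemma hess_euler (hq : HarmHom κ q) (y v : Evec m) :
    fderiv ℝ (fderiv ℝ q) y y v = (κ - 1) * fderiv ℝ q y v := by
  have hd : DifferentiableAt ℝ (fderiv ℝ q) y :=
    (contDiff_fderiv hq.contDiff).differentiable (by simp) y
  have h : fderiv ℝ (fun z => fderiv ℝ q z z) y v = κ * fderiv ℝ q y v := by
    rw [funext hq.euler, fderiv_const_mul (hq.contDiff.differentiable (by simp) y)]
    simp
  rw [fderiv_clm_apply hd differentiableAt_fun_id] at h
  simp only [fderiv_fun_id, _root_.add_apply, ContinuousLinearMap.comp_id,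
    ContinuousLinearMap.flip_apply] at h
  rw [hess_symm hq.contDiff]
  linarith

protected lemma dirDeriv (hq : HarmHom κ q) (a : Evec m) : HarmHom (κ - 1) (dirDeriv a q) where
  contDiff := contDiff_dirDeriv hq.contDiff a
  euler y := by rw [fderiv_dirDeriv hq.contDiff, hq.hess_euler]; rfl
  harmonic y := by
    rw [laplacian_dirDeriv hq.contDiff, funext hq.harmonic]
    simp [dirDeriv]

end HarmHom

lemma fderiv_comp_linearIsometry (q : Evec m → ℝ) (A : Evec m ≃ₗᵢ[ℝ] Evec m) (u v : Evec m) :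
    fderiv ℝ (q ∘ A) u v = fderiv ℝ q (A u) (A v) :=
  DFunLike.congr_fun (A.toContinuousLinearEquiv.comp_right_fderiv (f := q) (x := u)) v

lemma hess_comp_linearIsometry (hq : ContDiff ℝ ∞ q) (A : Evec m ≃ₗᵢ[ℝ] Evec m)
    (u v w : Evec m) :
    fderiv ℝ (fderiv ℝ (q ∘ A)) u v w = fderiv ℝ (fderiv ℝ q) (A u) (A v) (A w) := by
  have hA : ContDiff ℝ ∞ (q ∘ A) := hq.comp A.contDiff
  have h : dirDeriv w (q ∘ A) = dirDeriv (A w) q ∘ A :=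
    funext fun y => fderiv_comp_linearIsometry q A y w
  rw [← fderiv_dirDeriv hA, h, fderiv_comp_linearIsometry,
    fderiv_dirDeriv hq]

lemma HarmHom.comp_linearIsometry (hq : HarmHom κ q) (A : Evec m ≃ₗᵢ[ℝ] Evec m) :
    HarmHom κ (q ∘ A) where
  contDiff := hq.contDiff.comp A.contDiff
  euler y := by rw [fderiv_comp_linearIsometry, hq.euler]; rfl
  harmonic y := by
    have h := laplacian_eq_sum_hess q ((EuclideanSpace.basisFun (Fin m) ℝ).map A) (A y)
    rw [laplacian_eq_sum_hess _ (EuclideanSpace.basisFun (Fin m) ℝ), ← hq.harmonic (A y), h]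
    simp only [hess_comp_linearIsometry hq.contDiff, OrthonormalBasis.map_apply]

end HarmonicFunctions

section Reflections

/-- The inverse of the squared norm. -/
def invSq (x : Evec m) : ℝ := (‖x‖ ^ 2)⁻¹

/-- The function `|x|^{-m}`. -/
def invPow (x : Evec m) : ℝ := (‖x‖ ^ m)⁻¹

lemma inner_self_mul_invSq {x : Evec m} (hx : x ≠ 0) : ⟪x, x⟫ * invSq x = 1 := by
  rw [real_inner_self_eq_norm_sq, invSq]
  exact mul_inv_cancel₀ (pow_ne_zero _ (norm_ne_zero_iff.2 hx))

lemma contDiffAt_invSq {x : Evec m} (hx : x ≠ 0) : ContDiffAt ℝ ∞ invSq x :=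
  (contDiff_norm_sq ℝ).contDiffAt.inv (by simpa using hx)

lemma contDiffAt_invPow {x : Evec m} (hx : x ≠ 0) : ContDiffAt ℝ ∞ invPow x :=
  ((contDiffAt_norm ℝ hx).pow m).inv (by simpa using fun h => absurd h hx)

/-- The reflection `R_a` as a linear isometry. -/
def reflIso (a : Evec m) : Evec m ≃ₗᵢ[ℝ] Evec m :=
  (Submodule.reflection (Submodule.span ℝ {a})).trans (LinearIsometryEquiv.neg ℝ)

lemma reflIso_apply (a u : Evec m) : reflIso a u = reflv a u := by
  simp only [reflIso, LinearIsometryEquiv.trans_apply, LinearIsometryEquiv.coe_neg,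
    Submodule.reflection_singleton_apply, reflv]
  rw [two_smul, ← add_smul, neg_sub, RCLike.ofReal_real_eq_id, id]
  congr 2
  ring

lemma reflv_eq (x u : Evec m) : reflv x u = u - (2 * ⟪x, u⟫ * invSq x) • x := by
  simp [reflv, invSq, div_eq_mul_inv]

lemma contDiffAt_reflv {x : Evec m} (hx : x ≠ 0) (u : Evec m) :
    ContDiffAt ℝ ∞ (fun p : Evec m × Evec m => reflv p.1 p.2) (x, u) := by
  have hi : ContDiffAt ℝ ∞ (fun p : Evec m × Evec m => invSq p.1) (x, u) :=
    (contDiffAt_invSq hx).comp (x, u) (g := invSq) contDiffAt_fst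
  simp only [reflv_eq]
  exact contDiffAt_snd.sub (((contDiffAt_const.mul (contDiffAt_fst.inner ℝ contDiffAt_snd)).mul
    hi).smul contDiffAt_fst)

lemma norm_reflv (a u : Evec m) : ‖reflv a u‖ = ‖u‖ := by
  rw [← reflIso_apply, LinearIsometryEquiv.norm_map]

lemma reflv_reflv (a u : Evec m) : reflv a (reflv a u) = u := by
  simp [← reflIso_apply, reflIso, Submodule.reflection_reflection]

lemma reflv_smul {t : ℝ} (ht : t ≠ 0) (x u : Evec m) : reflv (t • x) u = reflv x u := by
  rcases eq_or_ne x 0 with rfl | hx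
  · simp
  · have : ‖x‖ ≠ 0 := norm_ne_zero_iff.2 hx
    simp only [reflv, smul_smul, inner_smul_left, norm_smul, mul_pow, Real.norm_eq_abs, sq_abs,
      RCLike.conj_to_real]
    congr 2
    field_simp

lemma reflv_neg (x u : Evec m) : reflv (-x) u = reflv x u := by
  simpa using reflv_smul (neg_ne_zero.2 one_ne_zero) x u

/-- The infinitesimal rotation by which `R_x` turns when `x` moves in direction `v`:
`∂_v R_x = R_x ∘ reflGen x v`. -/
def reflGen (x v : Evec m) : Evec m →L[ℝ] Evec m :=
  (2 * invSq x) • ((innerSL ℝ v).smulRight x - (innerSL ℝ x).smulRight v)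

lemma reflGen_apply (x v u : Evec m) :
    reflGen x v u = (2 * invSq x) • (⟪v, u⟫ • x - ⟪x, u⟫ • v) := by
  simp [reflGen]

lemma reflGen_self (x u : Evec m) : reflGen x x u = 0 := by
  simp [reflGen_apply]

lemma sum_inner_ev_smul_reflGen (x a u : Evec m) :
    ∑ j, ⟪a, ev j⟫ • reflGen x (ev j) u = reflGen x a u := by
  have h (v : Evec m) : reflGen x v u = ((2 * invSq x) •
      ((innerSL ℝ u).smulRight x - ⟪x, u⟫ • ContinuousLinearMap.id ℝ (Evec m))) v := by
    simp [reflGen_apply, real_inner_comm]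
  simp only [h]
  exact sum_inner_ev_smul_map _ a

end Reflections

section CurveDerivatives

variable {X W : ℝ → Evec m} {v w : Evec m} {t : ℝ}

lemma hasDerivAt_invSq_comp (hX : HasDerivAt X v t) (h0 : X t ≠ 0) :
    HasDerivAt (fun s => invSq (X s)) (-2 * ⟪X t, v⟫ * invSq (X t) ^ 2) t := by
  refine (hX.norm_sq.inv (by simpa using h0)).congr_deriv ?_
  have : ‖X t‖ ≠ 0 := norm_ne_zero_iff.2 h0
  simp only [invSq]
  field_simp

lemma hasDerivAt_norm_comp (hX : HasDerivAt X v t) (h0 : X t ≠ 0) :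
    HasDerivAt (fun s => ‖X s‖) (⟪X t, v⟫ * ‖X t‖⁻¹) t := by
  have h := hX.norm_sq.sqrt (by simpa using h0)
  simp only [Real.sqrt_sq (norm_nonneg _)] at h
  refine h.congr_deriv ?_
  have : ‖X t‖ ≠ 0 := norm_ne_zero_iff.2 h0
  field_simp

lemma hasDerivAt_invPow_comp (hX : HasDerivAt X v t) (h0 : X t ≠ 0) :
    HasDerivAt (fun s => invPow (X s)) (-(m : ℝ) * ⟪X t, v⟫ * invSq (X t) * invPow (X t)) t := by
  have hn : ‖X t‖ ≠ 0 := norm_ne_zero_iff.2 h0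
  refine (((hasDerivAt_norm_comp hX h0).pow m).inv (pow_ne_zero m hn)).congr_deriv ?_
  simp only [invSq, invPow, Pi.pow_apply]
  rcases m with _ | n
  · simp
  · simp only [Nat.add_sub_cancel]
    field_simp
    ring

lemma hasDerivAt_reflv_comp (hX : HasDerivAt X v t) (hW : HasDerivAt W w t) (h0 : X t ≠ 0) :
    HasDerivAt (fun s => reflv (X s) (W s)) (reflv (X t) (reflGen (X t) v (W t) + w)) t := by
  have h := hW.sub ((((hX.inner ℝ hW).const_mul 2).mul (hasDerivAt_invSq_comp hX h0)).smul hX)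
  simp only [reflv_eq]
  refine h.congr_deriv ?_
  have hn := inner_self_mul_invSq h0
  simp only [reflGen_apply, Pi.mul_apply, inner_add_right, inner_smul_right, inner_sub_right]
  match_scalars
  · ring
  · ring
  · linear_combination (4 * invSq (X t) * ⟪v, W t⟫) * hn

end CurveDerivatives

section SmoothFamilies

variable {P : Type*} [NormedAddCommGroup P] [NormedSpace ℝ P] {Ω : Set (P × Evec m)}
  {G : P → Evec m → Evec m → ℝ} {ζ : P} {x : Evec m}

/-- Joint smoothness of a family `G ζ` of functions of `(x, u)`, as long as `(ζ, x)` stays in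
`Ω`; the variable `u` is unrestricted. -/
def SmoothFamily (Ω : Set (P × Evec m)) (G : P → Evec m → Evec m → ℝ) : Prop :=
  ContDiffOn ℝ ∞ (fun p : P × Evec m × Evec m => G p.1 p.2.1 p.2.2) {p | (p.1, p.2.1) ∈ Ω}

lemma pd1_eq_of_hasFDerivAt {f : Evec m → Evec m → ℝ} {L : Evec m × Evec m →L[ℝ] ℝ}
    {u : Evec m} (h : HasFDerivAt (fun p : Evec m × Evec m => f p.1 p.2) L (x, u)) (i : Fin m) :
    pd1 i f x u = L (ev i, 0) :=
  DFunLike.congr_fun (h.comp x (f := fun y => (y, u)) (hasFDerivAt_prodMk_left x u)).fderiv (ev i)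

lemma pd2_eq_of_hasFDerivAt {f : Evec m → Evec m → ℝ} {L : Evec m × Evec m →L[ℝ] ℝ}
    {u : Evec m} (h : HasFDerivAt (fun p : Evec m × Evec m => f p.1 p.2) L (x, u)) (i : Fin m) :
    pd2 i f x u = L (0, ev i) :=
  DFunLike.congr_fun (h.comp u (f := fun w => (x, w)) (hasFDerivAt_prodMk_right x u)).fderiv (ev i)

namespace SmoothFamily

lemma contDiffAt (hG : SmoothFamily Ω G) (hΩ : IsOpen Ω) (hx : (ζ, x) ∈ Ω) (u : Evec m) :
    ContDiffAt ℝ ∞ (fun p : P × Evec m × Evec m => G p.1 p.2.1 p.2.2) (ζ, x, u) :=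
  ContDiffOn.contDiffAt hG ((hΩ.preimage (by fun_prop)).mem_nhds hx)

lemma contDiffOn_fderiv (hG : SmoothFamily Ω G) (hΩ : IsOpen Ω) :
    ContDiffOn ℝ ∞ (fderiv ℝ fun p : P × Evec m × Evec m => G p.1 p.2.1 p.2.2)
      {p | (p.1, p.2.1) ∈ Ω} :=
  ContDiffOn.fderiv_of_isOpen hG (hΩ.preimage (by fun_prop)) (by simp)

lemma hasFDerivAt (hG : SmoothFamily Ω G) (hΩ : IsOpen Ω) (hx : (ζ, x) ∈ Ω) (u : Evec m) :
    HasFDerivAt (fun p : Evec m × Evec m => G ζ p.1 p.2)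
      ((fderiv ℝ (fun p : P × Evec m × Evec m => G p.1 p.2.1 p.2.2) (ζ, x, u)).comp
        (.inr ℝ P (Evec m × Evec m))) (x, u) :=
  ((hG.contDiffAt hΩ hx u).differentiableAt (by simp)).hasFDerivAt.comp (x, u)
    (f := fun p : Evec m × Evec m => (ζ, p)) (hasFDerivAt_prodMk_right ζ (x, u))

lemma differentiableAt_fst (hG : SmoothFamily Ω G) (hΩ : IsOpen Ω) (hx : (ζ, x) ∈ Ω)
    (u : Evec m) : DifferentiableAt ℝ (fun y => G ζ y u) x :=
  (hG.hasFDerivAt hΩ hx u).differentiableAt.comp x (f := fun y => (y, u)) (by fun_prop)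

lemma differentiableAt_snd (hG : SmoothFamily Ω G) (hΩ : IsOpen Ω) (hx : (ζ, x) ∈ Ω)
    (u : Evec m) : DifferentiableAt ℝ (G ζ x) u :=
  (hG.hasFDerivAt hΩ hx u).differentiableAt.comp u (f := fun w => (x, w)) (by fun_prop)

lemma pd1 (hG : SmoothFamily Ω G) (hΩ : IsOpen Ω) (i : Fin m) :
    SmoothFamily Ω fun ζ => pd1 i (G ζ) :=
  ((hG.contDiffOn_fderiv hΩ).clm_apply (contDiffOn_const (c := (0, ev i, 0)))).congr fun p hp =>
    pd1_eq_of_hasFDerivAt (hG.hasFDerivAt hΩ hp p.2.2) i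

lemma pd2 (hG : SmoothFamily Ω G) (hΩ : IsOpen Ω) (i : Fin m) :
    SmoothFamily Ω fun ζ => pd2 i (G ζ) :=
  ((hG.contDiffOn_fderiv hΩ).clm_apply (contDiffOn_const (c := (0, 0, ev i)))).congr fun p hp =>
    pd2_eq_of_hasFDerivAt (hG.hasFDerivAt hΩ hp p.2.2) i

end SmoothFamily

/-- The operator `⟨∂_u, ∂_x⟩`. -/
def divT (f : Evec m → Evec m → ℝ) (x u : Evec m) : ℝ := ∑ j, pd2 j (pd1 j f) x u

lemma divT_congr {f f' : Evec m → Evec m → ℝ} (h : f =ᶠ[𝓝 x] f') : divT f x = divT f' x := by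
  have hpd (j : Fin m) : pd1 j f x = pd1 j f' x := funext fun u =>
    congrArg (fun L : Evec m →L[ℝ] ℝ => L (ev j)) (h.fun_comp (fun F => F u)).fderiv_eq
  funext u
  simp only [divT, pd2, hpd]

lemma Dk_eq_divT (hG : SmoothFamily Ω G) (hΩ : IsOpen Ω) (k : ℕ) (hx : (ζ, x) ∈ Ω)
    (u : Evec m) :
    Dk m k (G ζ) x u = ∑ i, pd1 i (pd1 i (G ζ)) x u
      - 4 / ((m : ℝ) + 2 * k - 2) * fderiv ℝ (fun x => divT (G ζ) x u) x u
      + 4 * ‖u‖ ^ 2 / (((m : ℝ) + 2 * k - 2) * ((m : ℝ) + 2 * k - 4)) *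
        divT (divT (G ζ)) x u := by
  have hs (j : Fin m) : SmoothFamily Ω fun ζ => pd2 j (pd1 j (G ζ)) := (hG.pd1 hΩ j).pd2 hΩ j
  have hd (i : Fin m) {y : Evec m} (hy : (ζ, y) ∈ Ω) (w : Evec m) :
      pd1 i (divT (G ζ)) y w = ∑ j, pd1 i (pd2 j (pd1 j (G ζ))) y w := by
    simp only [pd1.eq_1 i (divT _), divT]
    rw [fderiv_fun_sum fun j _ => (hs j).differentiableAt_fst hΩ hy w]
    exact sum_apply _ _ _
  have hx_u (i : Fin m) : pd2 i (pd1 i (divT (G ζ))) x u =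
      ∑ j, pd2 i (pd1 i (pd2 j (pd1 j (G ζ)))) x u := by
    simp only [pd2.eq_1 i (pd1 i (divT _)), hd i hx]
    rw [fderiv_fun_sum fun j _ => ((hs j).pd1 hΩ i).differentiableAt_snd hΩ hx u]
    exact sum_apply _ _ _
  have hu : fderiv ℝ (fun x => divT (G ζ) x u) x u =
      ∑ i, ∑ j, u i * pd1 i (pd2 j (pd1 j (G ζ))) x u := by
    rw [← sum_inner_ev_mul_map]
    exact Finset.sum_congr rfl fun i _ => by
      rw [inner_ev, ← Finset.mul_sum, ← hd i hx]; rfl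
  rw [Dk, hu, divT.eq_1 (divT _)]
  simp only [hx_u]

end SmoothFamilies

section ReflectedHarmonics

variable {κ : ℝ} {q : Evec m → ℝ}

/-- The function `q ∘ R_x`. -/
def reflPull (q : Evec m → ℝ) (x u : Evec m) : ℝ := q (reflv x u)

lemma reflPull_eq_comp (q : Evec m → ℝ) (x : Evec m) : reflPull q x = q ∘ reflIso x := by
  funext u
  simp [reflPull, reflIso_apply]

protected lemma HarmHom.reflPull (hq : HarmHom κ q) (x : Evec m) : HarmHom κ (reflPull q x) :=
  reflPull_eq_comp q x ▸ hq.comp_linearIsometry (reflIso x)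

lemma fderiv_reflPull (q : Evec m → ℝ) (x u v : Evec m) :
    fderiv ℝ (reflPull q x) u v = fderiv ℝ q (reflv x u) (reflv x v) := by
  rw [reflPull_eq_comp, fderiv_comp_linearIsometry, reflIso_apply, reflIso_apply]

lemma hess_reflPull (hq : ContDiff ℝ ∞ q) (x u v w : Evec m) :
    fderiv ℝ (fderiv ℝ (reflPull q x)) u v w =
      fderiv ℝ (fderiv ℝ q) (reflv x u) (reflv x v) (reflv x w) := by
  simp only [reflPull_eq_comp, hess_comp_linearIsometry hq, reflIso_apply]

section Curves

variable {X W : ℝ → Evec m} {v w : Evec m} {t : ℝ}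

lemma hasDerivAt_reflPull_comp (hq : ContDiff ℝ ∞ q) (hX : HasDerivAt X v t) (h0 : X t ≠ 0)
    (u : Evec m) :
    HasDerivAt (fun s => reflPull q (X s) u)
      (fderiv ℝ (reflPull q (X t)) u (reflGen (X t) v u)) t := by
  have h := hasDerivAt_reflv_comp hX (hasDerivAt_const t u) h0
  rw [add_zero] at h
  rw [fderiv_reflPull]
  exact (hq.differentiable (by simp) _).hasFDerivAt.comp_hasDerivAt t h

lemma hasDerivAt_fderiv_reflPull_comp (hq : ContDiff ℝ ∞ q) (hX : HasDerivAt X v t)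
    (hW : HasDerivAt W w t) (h0 : X t ≠ 0) (u : Evec m) :
    HasDerivAt (fun s => fderiv ℝ (reflPull q (X s)) u (W s))
      (fderiv ℝ (fderiv ℝ (reflPull q (X t))) u (reflGen (X t) v u) (W t) +
        fderiv ℝ (reflPull q (X t)) u (reflGen (X t) v (W t) + w)) t := by
  have hu := hasDerivAt_reflv_comp hX (hasDerivAt_const t u) h0
  rw [add_zero] at hu
  simp only [fderiv_reflPull, hess_reflPull hq]
  exact (((contDiff_fderiv hq).differentiable (by simp) _).hasFDerivAt.comp_hasDerivAt t
    hu).clm_apply (hasDerivAt_reflv_comp hX hW h0)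

lemma hasDerivAt_reflGen_comp (hX : HasDerivAt X v t) (h0 : X t ≠ 0) (u : Evec m) :
    HasDerivAt (fun s => reflGen (X s) v u)
      (-(2 * ⟪X t, v⟫ * invSq (X t)) • reflGen (X t) v u) t := by
  simp only [reflGen_apply]
  refine (((hasDerivAt_invSq_comp hX h0).const_mul 2).smul ((hX.const_smul ⟪v, u⟫).sub
    ((hX.inner ℝ (hasDerivAt_const t u)).smul_const v))).congr_deriv ?_
  simp only [inner_zero_right, zero_add, sub_self, smul_zero, Pi.sub_apply, Pi.smul_apply]
  module

end Curves

variable {x : Evec m} {g : Evec m → ℝ} {D W : Evec m → Evec m}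

lemma differentiableAt_reflv (hW : DifferentiableAt ℝ W x) (hx : x ≠ 0) :
    DifferentiableAt ℝ (fun y => reflv y (W y)) x :=
  ((contDiffAt_reflv hx (W x)).differentiableAt (by simp)).comp x (f := fun y => (y, W y))
    (g := fun p => reflv p.1 p.2) (differentiableAt_id.prodMk hW)

lemma differentiableAt_reflPull (hq : ContDiff ℝ ∞ q) (hx : x ≠ 0) (u : Evec m) :
    DifferentiableAt ℝ (fun y => reflPull q y u) x :=
  (hq.differentiable (by simp) _).comp x (differentiableAt_reflv (differentiableAt_const u) hx)

lemma differentiableAt_fderiv_reflPull (hq : ContDiff ℝ ∞ q) (hW : DifferentiableAt ℝ W x)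
    (hx : x ≠ 0) (u : Evec m) :
    DifferentiableAt ℝ (fun y => fderiv ℝ (reflPull q y) u (W y)) x := by
  simp only [fderiv_reflPull]
  have hu : DifferentiableAt ℝ (fun y => fderiv ℝ q (reflv y u)) x :=
    ((contDiff_fderiv hq).differentiable (by simp) _).comp x
      (differentiableAt_reflv (differentiableAt_const u) hx)
  exact hu.clm_apply (differentiableAt_reflv hW hx)

lemma differentiableAt_reflGen (hx : x ≠ 0) (v u : Evec m) :
    DifferentiableAt ℝ (fun y => reflGen y v u) x := by
  have := (contDiffAt_invSq hx).differentiableAt (by simp)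
  have hi : DifferentiableAt ℝ (fun y => ⟪y, u⟫) x :=
    differentiableAt_id.inner ℝ (differentiableAt_const u)
  simp only [reflGen_apply]
  fun_prop

lemma fderiv_fderiv_reflPull (hq : ContDiff ℝ ∞ q) (hW : DifferentiableAt ℝ W x) (hx : x ≠ 0)
    (u v : Evec m) :
    fderiv ℝ (fun y => fderiv ℝ (reflPull q y) u (W y)) x v =
      fderiv ℝ (fderiv ℝ (reflPull q x)) u (reflGen x v u) (W x) +
        fderiv ℝ (reflPull q x) u (reflGen x v (W x) + fderiv ℝ W x v) := by
  refine fderiv_apply_eq_of_curves (differentiableAt_fderiv_reflPull hq hW hx u) ?_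
  rintro X rfl hX
  exact hasDerivAt_fderiv_reflPull_comp hq hX (hW.hasFDerivAt.comp_hasDerivAt 0 hX) hx u

lemma pd1_mul_reflPull (hq : ContDiff ℝ ∞ q) (hg : HasGradientAt g (D x) x) (hx : x ≠ 0)
    (u : Evec m) (j : Fin m) :
    pd1 j (fun x u => g x * reflPull q x u) x u =
      ⟪D x, ev j⟫ * reflPull q x u + g x * fderiv ℝ (reflPull q x) u (reflGen x (ev j) u) := by
  refine fderiv_apply_eq_of_curves
    (hg.differentiableAt.mul (differentiableAt_reflPull hq hx u)) ?_
  rintro X rfl hX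
  exact (hg.hasFDerivAt.comp_hasDerivAt 0 hX).mul (hasDerivAt_reflPull_comp hq hX hx u)

lemma fderiv_fderiv_apply_clm (hq : ContDiff ℝ ∞ q) (A : Evec m →L[ℝ] Evec m) (u v : Evec m) :
    fderiv ℝ (fun w => fderiv ℝ q w (A w)) u v =
      fderiv ℝ (fderiv ℝ q) u v (A u) + fderiv ℝ q u (A v) := by
  rw [fderiv_clm_apply ((contDiff_fderiv hq).differentiable (by simp) u) A.differentiableAt]
  simp [add_comm]

lemma HarmHom.sum_fderiv_reflGen (hq : HarmHom κ q) (x u : Evec m) :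
    ∑ j, fderiv ℝ (fun w => fderiv ℝ q w (reflGen x (ev j) w)) u (ev j) =
      2 * invSq x * (m + κ - 2) * fderiv ℝ q u x := by
  have hH : ∑ j, fderiv ℝ (fderiv ℝ q) u (ev j) (reflGen x (ev j) u) =
      2 * invSq x * ((κ - 1) * fderiv ℝ q u x) := by
    simp only [reflGen_apply, map_smul, map_sub, smul_eq_mul, real_inner_comm u (ev _),
      ← Finset.mul_sum, Finset.sum_sub_distrib, hq.hess_trace, mul_zero, sub_zero,
      hess_symm hq.contDiff u (ev _) x, sum_inner_ev_mul_map, hq.hess_euler,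
      hess_symm hq.contDiff u x u]
  have hL : ∑ j, fderiv ℝ q u (reflGen x (ev j) (ev j)) =
      2 * invSq x * ((m - 1) * fderiv ℝ q u x) := by
    simp only [reflGen_apply, map_smul, map_sub, smul_eq_mul, ← Finset.mul_sum,
      Finset.sum_sub_distrib, sum_inner_ev_mul_map, inner_ev_self, one_mul]
    simp [sub_mul]
  simp only [fderiv_fderiv_apply_clm hq.contDiff, Finset.sum_add_distrib, hH, hL]
  ring

lemma divT_mul_reflPull (hq : HarmHom κ q) (hg : HasGradientAt g (D x) x) (hx : x ≠ 0)
    (u : Evec m) :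
    divT (fun x u => g x * reflPull q x u) x u =
      fderiv ℝ (reflPull q x) u (D x + (2 * invSq x * (m + κ - 2) * g x) • x) := by
  have hp : HarmHom κ (reflPull q x) := hq.reflPull x
  have hpd (j : Fin m) : pd2 j (pd1 j (fun x u => g x * reflPull q x u)) x u =
      ⟪D x, ev j⟫ * fderiv ℝ (reflPull q x) u (ev j) +
        g x * fderiv ℝ (fun w => fderiv ℝ (reflPull q x) w (reflGen x (ev j) w)) u (ev j) := by
    simp only [pd2, pd1_mul_reflPull hq.contDiff hg hx]
    have hA : DifferentiableAt ℝ
        (fun w => fderiv ℝ (reflPull q x) w (reflGen x (ev j) w)) u :=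
      ((contDiff_fderiv hp.contDiff).differentiable (by simp) u).clm_apply
        (reflGen x (ev j)).differentiableAt
    have hd := (hp.contDiff.differentiable (by simp) u).hasFDerivAt
    exact DFunLike.congr_fun
      ((hd.const_mul _).add (hA.hasFDerivAt.const_mul (g x))).fderiv (ev j)
  simp only [divT, hpd, Finset.sum_add_distrib, ← Finset.mul_sum, hp.sum_fderiv_reflGen,
    sum_inner_ev_mul_map, map_add, map_smul, smul_eq_mul]
  ring

lemma divT_fderiv_reflPull (hq : HarmHom κ q) (hW : DifferentiableAt ℝ W x) (hx : x ≠ 0)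
    (u : Evec m) :
    divT (fun x u => fderiv ℝ (reflPull q x) u (W x)) x u =
      2 * invSq x * (m + κ - 2) * fderiv ℝ (fderiv ℝ (reflPull q x)) u x (W x) +
        ∑ j, fderiv ℝ (fderiv ℝ (reflPull q x)) u (ev j) (fderiv ℝ W x (ev j)) := by
  have hp : HarmHom κ (reflPull q x) := hq.reflPull x
  have hr : HarmHom (κ - 1) (dirDeriv (W x) (reflPull q x)) := hp.dirDeriv (W x)
  have hpd (j : Fin m) : pd2 j (pd1 j (fun x u => fderiv ℝ (reflPull q x) u (W x))) x u =
      fderiv ℝ (fun w => fderiv ℝ (dirDeriv (W x) (reflPull q x)) w (reflGen x (ev j) w)) u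
          (ev j) +
        fderiv ℝ (fderiv ℝ (reflPull q x)) u (ev j)
          (reflGen x (ev j) (W x) + fderiv ℝ W x (ev j)) := by
    simp only [pd2, pd1, fderiv_fderiv_reflPull hq.contDiff hW hx,
      ← fderiv_dirDeriv hp.contDiff]
    have hA : DifferentiableAt ℝ
        (fun w => fderiv ℝ (dirDeriv (W x) (reflPull q x)) w (reflGen x (ev j) w)) u :=
      ((contDiff_fderiv hr.contDiff).differentiable (by simp) u).clm_apply
        (reflGen x (ev j)).differentiableAt
    have hB := (contDiff_dirDeriv hp.contDiff
      (reflGen x (ev j) (W x) + fderiv ℝ W x (ev j))).differentiable (by simp) u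
    exact DFunLike.congr_fun (hA.hasFDerivAt.add hB.hasFDerivAt).fderiv (ev j)
  have hW_trace : ∑ j, fderiv ℝ (fderiv ℝ (reflPull q x)) u (ev j) (reflGen x (ev j) (W x)) =
      2 * invSq x * fderiv ℝ (fderiv ℝ (reflPull q x)) u x (W x) := by
    simp only [reflGen_apply, map_smul, map_sub, smul_eq_mul, real_inner_comm (W x) (ev _),
      ← Finset.mul_sum, Finset.sum_sub_distrib, hp.hess_trace, mul_zero, sub_zero,
      hess_symm hp.contDiff u (ev _) x, sum_inner_ev_mul_map]
  simp only [divT, hpd, Finset.sum_add_distrib, hr.sum_fderiv_reflGen, map_add, hW_trace]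
  rw [fderiv_dirDeriv hp.contDiff]
  ring

lemma pd1_pd1_mul_reflPull (hq : ContDiff ℝ ∞ q) (hg : ∀ y ≠ 0, HasGradientAt g (D y) y)
    (hD : DifferentiableAt ℝ D x) (hx : x ≠ 0) (u : Evec m) (j : Fin m) :
    pd1 j (pd1 j (fun x u => g x * reflPull q x u)) x u =
      ⟪fderiv ℝ D x (ev j), ev j⟫ * reflPull q x u +
      2 * (⟪D x, ev j⟫ * fderiv ℝ (reflPull q x) u (reflGen x (ev j) u)) +
      g x * (fderiv ℝ (fderiv ℝ (reflPull q x)) u (reflGen x (ev j) u) (reflGen x (ev j) u) +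
        fderiv ℝ (reflPull q x) u (reflGen x (ev j) (reflGen x (ev j) u) -
          (2 * ⟪x, ev j⟫ * invSq x) • reflGen x (ev j) u)) := by
  have hev : (fun y => pd1 j (fun x u => g x * reflPull q x u) y u) =ᶠ[𝓝 x] fun y =>
      ⟪D y, ev j⟫ * reflPull q y u + g y * fderiv ℝ (reflPull q y) u (reflGen y (ev j) u) := by
    filter_upwards [isOpen_ne.mem_nhds hx] with y hy
    exact pd1_mul_reflPull hq (hg y hy) hy u j
  rw [pd1, hev.fderiv_eq]
  refine fderiv_apply_eq_of_curves
    (((hD.inner ℝ (differentiableAt_const _)).mul (differentiableAt_reflPull hq hx u)).add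
      ((hg x hx).differentiableAt.mul
        (differentiableAt_fderiv_reflPull hq (differentiableAt_reflGen hx _ u) hx u))) ?_
  rintro X rfl hX
  have hDX := (hD.hasFDerivAt.comp_hasDerivAt 0 hX).inner ℝ (hasDerivAt_const 0 (ev j))
  have hgX := (hg _ hx).hasFDerivAt.comp_hasDerivAt 0 hX
  have hA := hasDerivAt_fderiv_reflPull_comp hq hX (hasDerivAt_reflGen_comp hX hx u) hx u
  refine ((hDX.mul (hasDerivAt_reflPull_comp hq hX hx u)).add (hgX.mul hA)).congr_deriv ?_
  simp only [Function.comp_apply, inner_zero_right, zero_add, InnerProductSpace.toDual_apply_apply,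
    neg_smul, ← sub_eq_add_neg]
  ring

lemma HarmHom.sum_hess_reflGen (hq : HarmHom κ q) (x u : Evec m) :
    ∑ j, fderiv ℝ (fderiv ℝ q) u (reflGen x (ev j) u) (reflGen x (ev j) u) =
      4 * invSq x ^ 2 * (⟪u, u⟫ * fderiv ℝ (fderiv ℝ q) u x x -
        2 * (κ - 1) * ⟪x, u⟫ * fderiv ℝ q u x) := by
  have hterm (j : Fin m) :
      fderiv ℝ (fderiv ℝ q) u (reflGen x (ev j) u) (reflGen x (ev j) u) =
        4 * invSq x ^ 2 * (⟪u, ev j⟫ * ⟪u, ev j⟫ * fderiv ℝ (fderiv ℝ q) u x x -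
          2 * ⟪x, u⟫ * (⟪u, ev j⟫ * fderiv ℝ (fderiv ℝ q) u x (ev j)) +
          ⟪x, u⟫ ^ 2 * fderiv ℝ (fderiv ℝ q) u (ev j) (ev j)) := by
    simp only [reflGen_apply, real_inner_comm u, map_smul, map_sub, smul_apply, sub_apply,
      smul_eq_mul, hess_symm hq.contDiff u (ev j) x]
    ring
  simp only [hterm, ← Finset.mul_sum, Finset.sum_add_distrib, Finset.sum_sub_distrib,
    ← Finset.sum_mul, sum_inner_ev_mul_inner_ev, sum_inner_ev_mul_map, hq.hess_trace,
    hess_symm hq.contDiff u x u, hq.hess_euler]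
  ring

lemma sum_reflGen_reflGen (hx : x ≠ 0) (u : Evec m) :
    ∑ j, reflGen x (ev j) (reflGen x (ev j) u) =
      (4 * invSq x ^ 2 * (2 - m) * ⟪x, u⟫) • x - (4 * invSq x) • u := by
  have hterm (j : Fin m) : reflGen x (ev j) (reflGen x (ev j) u) =
      (4 * invSq x ^ 2) • ((⟪x, ev j⟫ * ⟪u, ev j⟫) • x - ⟪x, x⟫ • ⟪u, ev j⟫ • ev j -
        ⟪x, u⟫ • x + ⟪x, u⟫ • ⟪x, ev j⟫ • ev j) := by
    simp only [reflGen_apply, inner_sub_right, inner_smul_right, inner_ev_self,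
      real_inner_comm x (ev j), real_inner_comm u (ev j)]
    module
  simp only [hterm, ← Finset.smul_sum, Finset.sum_add_distrib, Finset.sum_sub_distrib,
    ← Finset.sum_smul, sum_inner_ev_mul_inner_ev, sum_inner_ev_smul, Finset.sum_const,
    Finset.card_univ, Fintype.card_fin]
  match_scalars
  · ring
  · linear_combination (-4 * invSq x) * inner_self_mul_invSq hx

lemma sum_pd1_pd1_mul_reflPull (hq : HarmHom κ q) (hg : ∀ y ≠ 0, HasGradientAt g (D y) y)
    (hD : DifferentiableAt ℝ D x) (hx : x ≠ 0) (u : Evec m) :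
    ∑ j, pd1 j (pd1 j (fun x u => g x * reflPull q x u)) x u =
      (∑ j, ⟪fderiv ℝ D x (ev j), ev j⟫) * reflPull q x u +
      2 * fderiv ℝ (reflPull q x) u (reflGen x (D x) u) +
      4 * invSq x * g x * (invSq x * ⟪u, u⟫ * fderiv ℝ (fderiv ℝ (reflPull q x)) u x x -
        (m + 2 * κ - 4) * invSq x * ⟪x, u⟫ * fderiv ℝ (reflPull q x) u x -
        κ * reflPull q x u) := by
  have hp : HarmHom κ (reflPull q x) := hq.reflPull x
  have hgrad : ∑ j, ⟪D x, ev j⟫ * fderiv ℝ (reflPull q x) u (reflGen x (ev j) u) =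
      fderiv ℝ (reflPull q x) u (reflGen x (D x) u) := by
    simp only [← sum_inner_ev_smul_reflGen x (D x) u, map_sum, map_smul, smul_eq_mul]
  have hcurv : ∑ j, (reflGen x (ev j) (reflGen x (ev j) u) -
      (2 * ⟪x, ev j⟫ * invSq x) • reflGen x (ev j) u) =
        (4 * invSq x ^ 2 * (2 - m) * ⟪x, u⟫) • x - (4 * invSq x) • u := by
    simp only [mul_right_comm 2 _ (invSq x), mul_smul (2 * invSq x), Finset.sum_sub_distrib,
      ← Finset.smul_sum, sum_inner_ev_smul_reflGen, reflGen_self, smul_zero, sub_zero,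
      sum_reflGen_reflGen hx]
  simp only [pd1_pd1_mul_reflPull hq.contDiff hg hD hx, Finset.sum_add_distrib,
    ← Finset.mul_sum, ← Finset.sum_mul, ← map_sum, hgrad, hcurv, hp.sum_hess_reflGen]
  simp only [map_sub, map_smul, smul_eq_mul, hp.euler]
  ring

end ReflectedHarmonics

section KelvinKernel

variable {κ α a₁ a₂ : ℝ} {q : Evec m → ℝ} {b x : Evec m}

/-- The Kelvin transform of the affine function `y ↦ α + ⟨b, y⟩`. It is harmonic, and the
Poisson kernel of the ball is of this form. -/
def kelvinPot (α : ℝ) (b x : Evec m) : ℝ := (α * ⟪x, x⟫ + ⟪b, x⟫) * invPow x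

/-- The vector fields to which the gradient of `kelvinPot α b` belongs; the family is closed under
the modifications of that gradient caused by `⟨∂_u, ∂_x⟩`. -/
def kelvinField (a₁ a₂ : ℝ) (b x : Evec m) : Evec m :=
  invPow x • (b + (a₁ + a₂ * (invSq x * ⟪b, x⟫)) • x)

/-- The product of a Kelvin potential with `q (R_x u)`. -/
def kelvinKer (α : ℝ) (q : Evec m → ℝ) (b x u : Evec m) : ℝ := kelvinPot α b x * reflPull q x u

lemma contDiffAt_kelvinPot (hx : x ≠ 0) :
    ContDiffAt ℝ ∞ (fun p : Evec m × Evec m => kelvinPot α p.1 p.2) (b, x) :=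
  ((contDiffAt_const.mul (contDiffAt_snd.inner ℝ contDiffAt_snd)).add
    (contDiffAt_fst.inner ℝ contDiffAt_snd)).mul
      ((contDiffAt_invPow hx).comp (b, x) (g := invPow) contDiffAt_snd)

lemma contDiffAt_reflPull (hq : ContDiff ℝ ∞ q) (hx : x ≠ 0) (u : Evec m) :
    ContDiffAt ℝ ∞ (fun p : Evec m × Evec m => reflPull q p.1 p.2) (x, u) :=
  hq.contDiffAt.comp (x, u) (contDiffAt_reflv hx u)

lemma smoothFamily_kelvinKer (hq : ContDiff ℝ ∞ q) :
    SmoothFamily {p | p.2 ≠ 0} (kelvinKer α q) := fun ⟨b, x, u⟩ hx =>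
  (((contDiffAt_kelvinPot hx).comp (b, x, u) (f := fun p => (p.1, p.2.1)) (by fun_prop)).mul
    ((contDiffAt_reflPull hq hx u).comp (b, x, u) (f := fun p => (p.2.1, p.2.2))
      (by fun_prop))).contDiffWithinAt

lemma differentiableAt_kelvinField (hx : x ≠ 0) :
    DifferentiableAt ℝ (kelvinField a₁ a₂ b) x := by
  have hi := (contDiffAt_invSq hx).differentiableAt (by simp)
  have hP := (contDiffAt_invPow hx).differentiableAt (by simp)
  have hb : DifferentiableAt ℝ (fun y => ⟪b, y⟫) x := (innerSL ℝ b).differentiableAt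
  unfold kelvinField
  fun_prop

lemma hasGradientAt_kelvinPot (hx : x ≠ 0) :
    HasGradientAt (kelvinPot α b) (kelvinField ((2 - m) * α) (-m) b x) x := by
  have hd : DifferentiableAt ℝ (kelvinPot α b) x :=
    ((contDiffAt_kelvinPot hx).comp x (f := fun y => (b, y)) (by fun_prop)).differentiableAt
      (by simp)
  rw [hasGradientAt_iff_hasFDerivAt]
  refine hd.hasFDerivAt.congr_fderiv (ContinuousLinearMap.ext fun v => ?_)
  refine fderiv_apply_eq_of_curves hd ?_
  rintro X rfl hX
  have h := (((hX.inner ℝ hX).const_mul α).add ((hasDerivAt_const 0 b).inner ℝ hX)).mul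
    (hasDerivAt_invPow_comp hX hx)
  refine h.congr_deriv ?_
  simp only [kelvinField, InnerProductSpace.toDual_apply_apply, inner_smul_left, inner_add_left,
    inner_zero_left, real_inner_comm (X 0) v, RCLike.conj_to_real, Pi.add_apply]
  linear_combination
    (-m * α * ⟪X 0, v⟫ * invPow (X 0)) * inner_self_mul_invSq hx

lemma fderiv_kelvinField (hx : x ≠ 0) (v : Evec m) :
    fderiv ℝ (kelvinField a₁ a₂ b) x v =
      (-m * invSq x * ⟪x, v⟫) • kelvinField a₁ a₂ b x +
        invPow x • ((a₁ + a₂ * (invSq x * ⟪b, x⟫)) • v +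
          (a₂ * invSq x * (⟪b, v⟫ - 2 * invSq x * ⟪b, x⟫ * ⟪x, v⟫)) • x) := by
  refine fderiv_apply_eq_of_curves (differentiableAt_kelvinField hx) ?_
  rintro X rfl hX
  have hβ := (hasDerivAt_invSq_comp hX hx).mul ((hasDerivAt_const 0 b).inner ℝ hX)
  refine ((hasDerivAt_invPow_comp hX hx).smul
    ((((hβ.const_mul a₂).const_add a₁).smul hX).const_add b)).congr_deriv ?_
  simp only [kelvinField, inner_zero_left, add_zero, Pi.mul_apply, Pi.smul_apply']
  module

lemma sum_inner_fderiv_kelvinField (hx : x ≠ 0) :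
    ∑ j, ⟪fderiv ℝ (kelvinField a₁ a₂ b) x (ev j), ev j⟫ =
      -invPow x * invSq x * ((m + a₂) * ⟪b, x⟫) := by
  have hterm (j : Fin m) : ⟪fderiv ℝ (kelvinField a₁ a₂ b) x (ev j), ev j⟫ =
      -m * invSq x * (⟪x, ev j⟫ * ⟪kelvinField a₁ a₂ b x, ev j⟫) +
        invPow x * (a₁ + a₂ * (invSq x * ⟪b, x⟫) + a₂ * invSq x *
          (⟪b, ev j⟫ * ⟪x, ev j⟫ - 2 * invSq x * ⟪b, x⟫ * (⟪x, ev j⟫ * ⟪x, ev j⟫))) := by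
    rw [fderiv_kelvinField hx]
    simp only [inner_add_left, inner_smul_left, RCLike.conj_to_real, inner_ev_self]
    ring
  simp only [hterm, Finset.sum_add_distrib, ← Finset.mul_sum, Finset.sum_sub_distrib,
    sum_inner_ev_mul_inner_ev, Finset.sum_const, Finset.card_univ, Fintype.card_fin, nsmul_eq_mul,
    kelvinField, inner_smul_right, inner_add_right, real_inner_comm b x]
  linear_combination (-invPow x * (m * (a₁ + a₂ * (invSq x * ⟪b, x⟫)) +
    2 * a₂ * invSq x * ⟪b, x⟫)) * inner_self_mul_invSq hx

lemma divT_kelvinKer (hq : HarmHom κ q) (hx : x ≠ 0) (u : Evec m) :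
    divT (kelvinKer α q b) x u =
      fderiv ℝ (reflPull q x) u (kelvinField ((m + 2 * κ - 2) * α) (m + 2 * κ - 4) b x) := by
  refine (divT_mul_reflPull hq (hasGradientAt_kelvinPot hx) hx u).trans (congrArg _ ?_)
  simp only [kelvinField, kelvinPot]
  match_scalars
  · ring
  · linear_combination (2 * (m + κ - 2) * α * invPow x) * inner_self_mul_invSq hx

lemma HarmHom.sum_hess_fderiv_kelvinField (hq : HarmHom κ q) (hx : x ≠ 0) (u : Evec m) :
    ∑ j, fderiv ℝ (fderiv ℝ q) u (ev j) (fderiv ℝ (kelvinField a₁ a₂ b) x (ev j)) =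
      -m * invSq x * fderiv ℝ (fderiv ℝ q) u (kelvinField a₁ a₂ b x) x +
        invPow x * (a₂ * invSq x * (fderiv ℝ (fderiv ℝ q) u x b -
          2 * invSq x * ⟪b, x⟫ * fderiv ℝ (fderiv ℝ q) u x x)) := by
  have hterm (j : Fin m) :
      fderiv ℝ (fderiv ℝ q) u (ev j) (fderiv ℝ (kelvinField a₁ a₂ b) x (ev j)) =
        -m * invSq x * (⟪x, ev j⟫ * fderiv ℝ (fderiv ℝ q) u (kelvinField a₁ a₂ b x) (ev j)) +
        invPow x * ((a₁ + a₂ * (invSq x * ⟪b, x⟫)) * fderiv ℝ (fderiv ℝ q) u (ev j) (ev j) +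
          a₂ * invSq x * (⟪b, ev j⟫ * fderiv ℝ (fderiv ℝ q) u x (ev j) -
            2 * invSq x * ⟪b, x⟫ * (⟪x, ev j⟫ * fderiv ℝ (fderiv ℝ q) u x (ev j)))) := by
    rw [fderiv_kelvinField hx, hess_symm hq.contDiff u x, hess_symm hq.contDiff u _ (ev j)]
    simp only [map_add, map_smul, smul_eq_mul]
    ring
  simp only [hterm, Finset.sum_add_distrib, ← Finset.mul_sum, Finset.sum_sub_distrib,
    sum_inner_ev_mul_map, hq.hess_trace, mul_zero, zero_add]

lemma divT_divT_kelvinKer (hq : HarmHom κ q) (hx : x ≠ 0) (u : Evec m) :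
    divT (divT (kelvinKer α q b)) x u = (m + 2 * κ - 4) * invSq x * invPow x *
      (2 * fderiv ℝ (fderiv ℝ (reflPull q x)) u x b +
        ((m + 2 * κ - 2) * α + (m + 2 * κ - 6) * (invSq x * ⟪b, x⟫)) *
          fderiv ℝ (fderiv ℝ (reflPull q x)) u x x) := by
  have hp : HarmHom κ (reflPull q x) := hq.reflPull x
  have hdiv : divT (kelvinKer α q b) =ᶠ[𝓝 x] fun y w => fderiv ℝ (reflPull q y) w
      (kelvinField ((m + 2 * κ - 2) * α) (m + 2 * κ - 4) b y) := by
    filter_upwards [isOpen_ne.mem_nhds hx] with y hy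
    exact funext fun w => divT_kelvinKer hq hy w
  rw [divT_congr hdiv, divT_fderiv_reflPull hq (differentiableAt_kelvinField hx) hx,
    hp.sum_hess_fderiv_kelvinField hx, hess_symm hp.contDiff u _ x]
  simp only [kelvinField, map_add, map_smul, smul_eq_mul]
  ring

lemma fderiv_divT_kelvinKer (hq : HarmHom κ q) (hx : x ≠ 0) (u : Evec m) :
    fderiv ℝ (fun y => divT (kelvinKer α q b) y u) x u =
      2 * invSq x * (⟪u, u⟫ * fderiv ℝ (fderiv ℝ (reflPull q x)) u x
          (kelvinField ((m + 2 * κ - 2) * α) (m + 2 * κ - 4) b x) -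
        ⟪x, u⟫ * (κ - 1) * fderiv ℝ (reflPull q x) u
          (kelvinField ((m + 2 * κ - 2) * α) (m + 2 * κ - 4) b x)) +
      fderiv ℝ (reflPull q x) u
        (reflGen x u (kelvinField ((m + 2 * κ - 2) * α) (m + 2 * κ - 4) b x) +
          fderiv ℝ (kelvinField ((m + 2 * κ - 2) * α) (m + 2 * κ - 4) b) x u) := by
  have hp : HarmHom κ (reflPull q x) := hq.reflPull x
  have hdiv : (fun y => divT (kelvinKer α q b) y u) =ᶠ[𝓝 x] fun y => fderiv ℝ (reflPull q y) u
      (kelvinField ((m + 2 * κ - 2) * α) (m + 2 * κ - 4) b y) := by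
    filter_upwards [isOpen_ne.mem_nhds hx] with y hy using divT_kelvinKer hq hy u
  rw [hdiv.fderiv_eq, fderiv_fderiv_reflPull hq.contDiff (differentiableAt_kelvinField hx) hx]
  simp only [reflGen_apply x u u, map_sub, map_smul, smul_apply, sub_apply, smul_eq_mul,
    hp.hess_euler]
  ring

lemma Dk_kelvinKer {k : ℕ} (hk : 4 < (m : ℝ) + 2 * k) (hq : HarmHom k q) (hx : x ≠ 0)
    (u : Evec m) : Dk m k (kelvinKer α q b) x u = 0 := by
  have hp : HarmHom k (reflPull q x) := hq.reflPull x
  have hN : (m : ℝ) + 2 * k - 2 ≠ 0 := by linarith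
  have hN' : (m : ℝ) + 2 * k - 4 ≠ 0 := by linarith
  have hΔ : ∑ i, pd1 i (pd1 i (kelvinKer α q b)) x u = _ :=
    sum_pd1_pd1_mul_reflPull hq (fun y hy => hasGradientAt_kelvinPot hy)
      (differentiableAt_kelvinField hx) hx u
  rw [Dk_eq_divT (smoothFamily_kelvinKer hq.contDiff) (isOpen_ne.preimage continuous_snd) k hx u,
    divT_divT_kelvinKer hq hx, fderiv_divT_kelvinKer hq hx, hΔ, sum_inner_fderiv_kelvinField hx,
    fderiv_kelvinField hx]
  simp only [kelvinField, kelvinPot, reflGen_apply, map_add, map_sub, map_smul, smul_eq_mul,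
    hp.euler, inner_add_left, inner_smul_left, RCLike.conj_to_real, real_inner_comm b x,
    real_inner_comm b u, real_inner_comm x u, ← real_inner_self_eq_norm_sq]
  field_simp
  linear_combination invPow x * (4 * (m + 2 * k - 2) * k * α * reflPull q x u +
    invSq x * (8 * (m + 2 * k - 4) * k * ⟪b, x⟫ * reflPull q x u -
      4 * (m + 2 * k - 2) * (m + 2 * k - 4) * α * ⟪x, u⟫ * fderiv ℝ (reflPull q x) u x +
      4 * (m + 2 * k - 2) * α * ⟪u, u⟫ * fderiv ℝ (fderiv ℝ (reflPull q x)) u x x)) *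
    inner_self_mul_invSq hx

end KelvinKernel

section SphereIntegrals

instance : IsFiniteMeasure (sphereM m) := by
  unfold sphereM
  infer_instance

lemma measurableEmbedding_sphere :
    MeasurableEmbedding (Subtype.val : sphere (0 : Evec m) 1 → Evec m) :=
  .subtype_coe isClosed_sphere.measurableSet

lemma ae_mem_sphere : ∀ᵐ ζ ∂sphereM m, ζ ∈ sphere (0 : Evec m) 1 := by
  rw [sphereM, measurableEmbedding_sphere.ae_map_iff]
  exact .of_forall Subtype.property

lemma sphereM_restrict : (sphereM m).restrict (sphere 0 1) = sphereM m :=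
  Measure.restrict_eq_self_of_ae_mem ae_mem_sphere

variable {F : Type*} [NormedAddCommGroup F]

lemma integrable_sphereM {f : Evec m → F} (hf : ContinuousOn f (sphere 0 1)) :
    Integrable f (sphereM m) := by
  rw [← sphereM_restrict]
  exact hf.integrableOn_compact (isCompact_sphere 0 1)

lemma integral_sphereM_congr [NormedSpace ℝ F] {f g : Evec m → F}
    (h : Set.EqOn f g (sphere 0 1)) : ∫ ζ, f ζ ∂sphereM m = ∫ ζ, g ζ ∂sphereM m :=
  integral_congr_ae (ae_mem_sphere.mono h)

lemma hasFDerivAt_integral_sphereM [NormedSpace ℝ F] {E : Type*} [NormedAddCommGroup E]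
    [NormedSpace ℝ E] [ProperSpace E] {U : Set E} (hU : IsOpen U) {G : Evec m → E → F}
    {G' : Evec m → E → E →L[ℝ] F}
    (hG : ContinuousOn (fun p : Evec m × E => G p.1 p.2) (sphere 0 1 ×ˢ U))
    (hG' : ContinuousOn (fun p : Evec m × E => G' p.1 p.2) (sphere 0 1 ×ˢ U))
    (hd : ∀ ζ ∈ sphere (0 : Evec m) 1, ∀ x ∈ U, HasFDerivAt (G ζ) (G' ζ x) x) {x : E}
    (hx : x ∈ U) :
    HasFDerivAt (fun x => ∫ ζ, G ζ x ∂sphereM m) (∫ ζ, G' ζ x ∂sphereM m) x := by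
  obtain ⟨ε, hε, hεU⟩ := nhds_basis_closedBall.mem_iff.1 (hU.mem_nhds hx)
  obtain ⟨C, hC⟩ := ((isCompact_sphere (0 : Evec m) 1).prod
    (isCompact_closedBall x ε)).exists_bound_of_continuousOn
      (hG'.mono (Set.prod_mono subset_rfl hεU))
  have hsection : ∀ y ∈ U, Integrable (fun ζ => G ζ y) (sphereM m) := fun y hy =>
    integrable_sphereM (hG.comp (f := fun ζ => (ζ, y)) (by fun_prop) fun ζ hζ => ⟨hζ, hy⟩)
  have hsection' : Integrable (fun ζ => G' ζ x) (sphereM m) :=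
    integrable_sphereM (hG'.comp (f := fun ζ => (ζ, x)) (by fun_prop) fun ζ hζ => ⟨hζ, hx⟩)
  refine hasFDerivAt_integral_of_dominated_of_fderiv_le (F := fun y ζ => G ζ y)
    (F' := fun y ζ => G' ζ y) (bound := fun _ => C)
    (closedBall_mem_nhds x hε) ?_ (hsection x hx) hsection'.aestronglyMeasurable ?_
    (integrable_const C) ?_
  · filter_upwards [hU.mem_nhds hx] with y hy using (hsection y hy).aestronglyMeasurable
  · filter_upwards [ae_mem_sphere] with ζ hζ y hy using hC (ζ, y) ⟨hζ, hy⟩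
  · filter_upwards [ae_mem_sphere] with ζ hζ y hy using hd ζ hζ y (hεU hy)

end SphereIntegrals

section Superposition

variable {P : Type*} [NormedAddCommGroup P] [NormedSpace ℝ P] {Ω : Set (P × Evec m)}
  {G : P → Evec m → Evec m → ℝ} {γ : Evec m → P} {U : Set (Evec m)} {x : Evec m}
  {f : Evec m → Evec m → ℝ}

/-- The superposition `∫ G (γ ζ) dS(ζ)` of members of a family of functions of `(x, u)`. -/
def superposition (γ : Evec m → P) (G : P → Evec m → Evec m → ℝ) (x u : Evec m) : ℝ :=
  ∫ ζ, G (γ ζ) x u ∂sphereM m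

/-- The data of a superposition depending smoothly on `(x, u)` for `x ∈ U`: a smooth family over
`Ω` and a continuous map `γ` from the sphere to its parameters. -/
structure Superposable (Ω : Set (P × Evec m)) (U : Set (Evec m)) (γ : Evec m → P)
    (G : P → Evec m → Evec m → ℝ) : Prop where
  smooth : SmoothFamily Ω G
  isOpen_family : IsOpen Ω
  isOpen : IsOpen U
  continuousOn : ContinuousOn γ (sphere 0 1)
  mapsTo : ∀ ζ ∈ sphere (0 : Evec m) 1, ∀ x ∈ U, (γ ζ, x) ∈ Ω

namespace Superposable

lemma continuousOn_comp {F : Type*} [TopologicalSpace F] {f : P × Evec m × Evec m → F}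
    (hG : Superposable Ω U γ G) (hf : ContinuousOn f {p | (p.1, p.2.1) ∈ Ω}) :
    ContinuousOn (fun p : Evec m × Evec m × Evec m => f (γ p.1, p.2))
      (sphere 0 1 ×ˢ U ×ˢ Set.univ) :=
  hf.comp ((hG.continuousOn.comp continuousOn_fst fun _ hp => hp.1).prodMk continuousOn_snd)
    fun p hp => hG.mapsTo p.1 hp.1 p.2.1 hp.2.1

lemma integrable (hG : Superposable Ω U γ G) (hx : x ∈ U) (u : Evec m) :
    Integrable (fun ζ => G (γ ζ) x u) (sphereM m) :=
  integrable_sphereM ((hG.continuousOn_comp (ContDiffOn.continuousOn hG.smooth)).comp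
    (f := fun ζ => (ζ, x, u)) (by fun_prop) fun _ hζ => ⟨hζ, hx, trivial⟩)

lemma pd1 (hG : Superposable Ω U γ G) (i : Fin m) : Superposable Ω U γ fun p => pd1 i (G p) :=
  { hG with smooth := hG.smooth.pd1 hG.isOpen_family i }

lemma pd2 (hG : Superposable Ω U γ G) (i : Fin m) : Superposable Ω U γ fun p => pd2 i (G p) :=
  { hG with smooth := hG.smooth.pd2 hG.isOpen_family i }

lemma exists_hasFDerivAt (hG : Superposable Ω U γ G) (hx : x ∈ U) (u : Evec m) :
    ∃ L : Evec m → Evec m × Evec m →L[ℝ] ℝ, Integrable L (sphereM m) ∧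
      HasFDerivAt (fun p : Evec m × Evec m => superposition γ G p.1 p.2)
        (∫ ζ, L ζ ∂sphereM m) (x, u) ∧
      ∀ ζ ∈ sphere (0 : Evec m) 1,
        HasFDerivAt (fun p : Evec m × Evec m => G (γ ζ) p.1 p.2) (L ζ) (x, u) := by
  have hd : ∀ ζ ∈ sphere (0 : Evec m) 1, ∀ p ∈ U ×ˢ (Set.univ : Set (Evec m)), _ :=
    fun ζ hζ p hp => hG.smooth.hasFDerivAt hG.isOpen_family (hG.mapsTo ζ hζ p.1 hp.1) p.2
  have hL := hG.continuousOn_comp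
    ((hG.smooth.contDiffOn_fderiv hG.isOpen_family).continuousOn.clm_comp
      (continuousOn_const (c := .inr ℝ P (Evec m × Evec m))))
  refine ⟨_, integrable_sphereM (hL.comp (f := fun ζ => (ζ, x, u)) (by fun_prop)
    fun _ hζ => ⟨hζ, hx, trivial⟩), ?_, fun ζ hζ => hd ζ hζ (x, u) ⟨hx, trivial⟩⟩
  exact hasFDerivAt_integral_sphereM (hG.isOpen.prod isOpen_univ)
    (hG.continuousOn_comp (ContDiffOn.continuousOn hG.smooth)) hL hd
    (x := (x, u)) ⟨hx, trivial⟩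

lemma pd1_superposition (hG : Superposable Ω U γ G) (i : Fin m) (hx : x ∈ U) (u : Evec m) :
    _root_.pd1 i (superposition γ G) x u =
      superposition γ (fun p => _root_.pd1 i (G p)) x u := by
  obtain ⟨L, hL, hS, hζ⟩ := hG.exists_hasFDerivAt hx u
  rw [pd1_eq_of_hasFDerivAt hS, ContinuousLinearMap.integral_apply hL]
  exact integral_sphereM_congr fun ζ h => (pd1_eq_of_hasFDerivAt (hζ ζ h) i).symm

lemma pd2_superposition (hG : Superposable Ω U γ G) (i : Fin m) (hx : x ∈ U) (u : Evec m) :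
    _root_.pd2 i (superposition γ G) x u =
      superposition γ (fun p => _root_.pd2 i (G p)) x u := by
  obtain ⟨L, hL, hS, hζ⟩ := hG.exists_hasFDerivAt hx u
  rw [pd2_eq_of_hasFDerivAt hS, ContinuousLinearMap.integral_apply hL]
  exact integral_sphereM_congr fun ζ h => (pd2_eq_of_hasFDerivAt (hζ ζ h) i).symm

lemma continuousAt_superposition (hG : Superposable Ω U γ G) (hx : x ∈ U) (u : Evec m) :
    ContinuousAt (fun x => superposition γ G x u) x := by
  obtain ⟨L, -, hS, -⟩ := hG.exists_hasFDerivAt hx u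
  exact hS.continuousAt.comp (f := fun x => (x, u)) (by fun_prop)

lemma pd1_of_eqOn (hG : Superposable Ω U γ G) (hf : Set.EqOn f (superposition γ G) U)
    (i : Fin m) :
    Set.EqOn (_root_.pd1 i f) (superposition γ fun p => _root_.pd1 i (G p)) U := fun x hx => by
  have hfx := hf.eventuallyEq_of_mem (hG.isOpen.mem_nhds hx)
  funext u
  rw [← hG.pd1_superposition i hx u]
  exact congrArg (fun L : Evec m →L[ℝ] ℝ => L (ev i)) (hfx.fun_comp fun F => F u).fderiv_eq

lemma pd2_of_eqOn (hG : Superposable Ω U γ G) (hf : Set.EqOn f (superposition γ G) U)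
    (i : Fin m) :
    Set.EqOn (_root_.pd2 i f) (superposition γ fun p => _root_.pd2 i (G p)) U := fun x hx => by
  funext u
  rw [← hG.pd2_superposition i hx u]
  simp only [_root_.pd2, hf hx]

lemma Dk_superposition (hG : Superposable Ω U γ G) (k : ℕ) (hx : x ∈ U) (u : Evec m) :
    Dk m k (superposition γ G) x u = superposition γ (fun p => Dk m k (G p)) x u := by
  have h1 (i : Fin m) := hG.pd1 i
  have h11 (i : Fin m) := (h1 i).pd1 i
  have h21 (j : Fin m) := (h1 j).pd2 j
  have h121 (i j : Fin m) := (h21 j).pd1 i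
  have h2121 (i j : Fin m) := (h121 i j).pd2 i
  have e1 (i : Fin m) := hG.pd1_of_eqOn (Set.eqOn_refl _ U) i
  have e121 (i j : Fin m) := (h21 j).pd1_of_eqOn ((h1 j).pd2_of_eqOn (e1 j) j) i
  have e11 (i : Fin m) := congrFun ((h1 i).pd1_of_eqOn (e1 i) i hx) u
  have e2121 (i j : Fin m) := congrFun ((h121 i j).pd2_of_eqOn (e121 i j) i hx) u
  have i121 (i j : Fin m) := ((h121 i j).integrable hx u).const_mul (u i)
  have i2121 (i j : Fin m) := (h2121 i j).integrable hx u
  have iΔ := integrable_finsetSum Finset.univ fun i _ => (h11 i).integrable hx u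
  have iD := (integrable_finsetSum Finset.univ fun i _ =>
    integrable_finsetSum Finset.univ fun j _ => i121 i j).const_mul (4 / ((m : ℝ) + 2 * k - 2))
  have iDD := integrable_finsetSum Finset.univ fun i _ =>
    integrable_finsetSum Finset.univ fun j _ => i2121 i j
  simp only [Dk, e11, fun i j => congrFun (e121 i j hx) u, e2121, superposition]
  rw [integral_add (by exact iΔ.sub iD) (iDD.const_mul _), integral_sub iΔ iD,
    integral_const_mul, integral_const_mul,
    integral_finsetSum _ fun i _ => (h11 i).integrable hx u,
    integral_finsetSum _ fun i _ => integrable_finsetSum Finset.univ fun j _ => i121 i j,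
    integral_finsetSum _ fun i _ => integrable_finsetSum Finset.univ fun j _ => i2121 i j]
  simp only [fun i => integral_finsetSum Finset.univ fun j _ => i121 i j,
    fun i => integral_finsetSum Finset.univ fun j _ => i2121 i j, integral_const_mul]

end Superposable

end Superposition

section PoissonIntegrals

variable {κ : ℝ} {k : ℕ} {q : Evec m → ℝ} {ζ x : Evec m} {ι : Type*} [Fintype ι]
  {e : ι → Evec m → ℝ} {w : Evec m → ι → ℝ}

/-- The functions with `HarmHom κ` form a vector space. -/
def harmHom (m : ℕ) (κ : ℝ) : Submodule ℝ (Evec m → ℝ) where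
  carrier := {q | HarmHom κ q}
  zero_mem' := ⟨contDiff_const, fun y => by simp, congrFun InnerProductSpace.laplacian_const⟩
  add_mem' {p q} hp hq := by
    refine ⟨hp.contDiff.add hq.contDiff, fun y => ?_, fun y => ?_⟩
    · rw [fderiv_add (hp.contDiff.differentiable (by simp) y)
        (hq.contDiff.differentiable (by simp) y), add_apply, hp.euler, hq.euler, Pi.add_apply]
      ring
    · rw [(contDiff_infty.1 hp.contDiff 2).contDiffAt.laplacian_add
        (contDiff_infty.1 hq.contDiff 2).contDiffAt, hp.harmonic, hq.harmonic, add_zero]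
  smul_mem' c q hq := by
    refine ⟨contDiff_const.smul hq.contDiff, fun y => ?_, fun y => ?_⟩
    · rw [fderiv_const_smul (hq.contDiff.differentiable (by simp) y), smul_apply, hq.euler]
      simp only [Pi.smul_apply, smul_eq_mul]
      ring
    · rw [InnerProductSpace.laplacian_smul c (contDiff_infty.1 hq.contDiff 2).contDiffAt,
        hq.harmonic, smul_zero]

lemma linearCombination_apply_apply (e : ι → Evec m → ℝ) (c : ι → ℝ) (u : Evec m) :
    Fintype.linearCombination ℝ e c u = ∑ i, c i * e i u := by
  simp [Fintype.linearCombination_apply]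

lemma HarmHom.linearCombination (he : ∀ i, HarmHom κ (e i)) (c : ι → ℝ) :
    HarmHom κ (Fintype.linearCombination ℝ e c) := by
  rw [Fintype.linearCombination_apply]
  exact (harmHom m κ).sum_mem fun i _ =>
    (harmHom m κ).smul_mem (c i) (show e i ∈ harmHom m κ from he i)

lemma pd1_translate (f : Evec m → Evec m → ℝ) (a : Evec m) (i : Fin m) :
    pd1 i (fun x u => f (x - a) u) = fun x u => pd1 i f (x - a) u := by
  funext x u
  simp only [pd1]
  rw [fderiv_comp_sub (f := fun x => f x u) a]

lemma pd2_translate (f : Evec m → Evec m → ℝ) (a : Evec m) (i : Fin m) :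
    pd2 i (fun x u => f (x - a) u) = fun x u => pd2 i f (x - a) u := rfl

lemma Dk_translate (f : Evec m → Evec m → ℝ) (a x u : Evec m) :
    Dk m k (fun x u => f (x - a) u) x u = Dk m k f (x - a) u := by
  simp only [Dk, pd1_translate, pd2_translate]

/-- The Poisson kernel of the unit ball for the Laplacian, without normalization. -/
def poisson (ζ x : Evec m) : ℝ := (1 - ‖x‖ ^ 2) * invPow (x - ζ)

/-- The Poisson kernel of the unit ball with its `Z_k`-factor integrated against `q`. -/
def poissonKer (q : Evec m → ℝ) (ζ x u : Evec m) : ℝ := poisson ζ x * reflPull q (x - ζ) u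

lemma poisson_eq_kelvinPot (hζ : ζ ∈ sphere (0 : Evec m) 1) (x : Evec m) :
    poisson ζ x = kelvinPot (-1) ((-2 : ℝ) • ζ) (x - ζ) := by
  have h : ⟪ζ, ζ⟫ = 1 := by rw [real_inner_self_eq_norm_sq, mem_sphere_zero_iff_norm.1 hζ, one_pow]
  simp only [poisson, kelvinPot, ← real_inner_self_eq_norm_sq, inner_sub_left, inner_sub_right,
    inner_smul_left, RCLike.conj_to_real, real_inner_comm ζ x]
  linear_combination invPow (x - ζ) * (-1) * h

lemma Dk_poissonKer (hk : 4 < (m : ℝ) + 2 * k) (hq : HarmHom k q)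
    (hζ : ζ ∈ sphere (0 : Evec m) 1) (hx : x ≠ ζ) (u : Evec m) :
    Dk m k (poissonKer q ζ) x u = 0 := by
  have h : poissonKer q ζ = fun x u => kelvinKer (-1) q ((-2 : ℝ) • ζ) (x - ζ) u := by
    funext x u
    rw [poissonKer, poisson_eq_kelvinPot hζ, kelvinKer]
  rw [h, Dk_translate, Dk_kelvinKer hk hq (sub_ne_zero.2 hx)]

/-- The family of all `poissonKer q ζ` with `q` in the span of `e`, parametrized by `ζ` and the
coefficients of `q`. -/
def poissonFamily (e : ι → Evec m → ℝ) (p : Evec m × (ι → ℝ)) : Evec m → Evec m → ℝ :=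
  poissonKer (Fintype.linearCombination ℝ e p.2) p.1

/-- The integral over the sphere of the kernels `poissonKer (∑ i, w ζ i • e i) ζ`. -/
def poissonIntegral (e : ι → Evec m → ℝ) (w : Evec m → ι → ℝ) : Evec m → Evec m → ℝ :=
  superposition (fun ζ => (ζ, w ζ)) (poissonFamily e)

lemma smoothFamily_poissonFamily (he : ∀ i, ContDiff ℝ ∞ (e i)) :
    SmoothFamily {p | p.2 ≠ p.1.1} (poissonFamily e) := fun ⟨⟨ζ, c⟩, x, u⟩ hx => by
  have h0 : x - ζ ≠ 0 := sub_ne_zero.2 hx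
  have hP : ContDiffAt ℝ ∞ (fun p : (Evec m × (ι → ℝ)) × Evec m × Evec m =>
      invPow (p.2.1 - p.1.1)) ((ζ, c), x, u) :=
    (contDiffAt_invPow h0).comp ((ζ, c), x, u) (g := invPow) (by fun_prop)
  have hr (i : ι) : ContDiffAt ℝ ∞ (fun p : (Evec m × (ι → ℝ)) × Evec m × Evec m =>
      reflPull (e i) (p.2.1 - p.1.1) p.2.2) ((ζ, c), x, u) :=
    (contDiffAt_reflPull (he i) h0 u).comp ((ζ, c), x, u)
      (f := fun p : (Evec m × (ι → ℝ)) × Evec m × Evec m => (p.2.1 - p.1.1, p.2.2)) (by fun_prop)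
  simp only [poissonFamily, poissonKer, poisson, reflPull, linearCombination_apply_apply] at hr ⊢
  exact (((contDiffAt_const.sub (ContDiffAt.norm_sq ℝ (by fun_prop))).mul hP).mul
    (.sum fun i _ => .mul (by fun_prop) (hr i))).contDiffWithinAt

lemma superposable_poissonFamily (he : ∀ i, ContDiff ℝ ∞ (e i))
    (hw : ContinuousOn w (sphere 0 1)) :
    Superposable {p | p.2 ≠ p.1.1} (ball 0 1) (fun ζ => (ζ, w ζ)) (poissonFamily e) where
  smooth := smoothFamily_poissonFamily he
  isOpen_family := isOpen_ne_fun continuous_snd (by fun_prop)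
  isOpen := isOpen_ball
  continuousOn := continuousOn_id.prodMk hw
  mapsTo _ hζ _ hx := sphere_disjoint_ball.symm.ne_of_mem hx hζ

lemma Dk_poissonIntegral (hk : 4 < (m : ℝ) + 2 * k) (he : ∀ i, HarmHom k (e i))
    (hw : ContinuousOn w (sphere 0 1)) (hx : x ∈ ball 0 1) (u : Evec m) :
    Dk m k (poissonIntegral e w) x u = 0 := by
  rw [poissonIntegral,
    (superposable_poissonFamily (fun i => (he i).contDiff) hw).Dk_superposition k hx]
  refine (integral_sphereM_congr fun ζ hζ => ?_).trans (integral_zero _ ℝ)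
  exact Dk_poissonKer hk (.linearCombination he _) hζ (sphere_disjoint_ball.symm.ne_of_mem hx hζ) u

lemma continuousAt_poissonIntegral (he : ∀ i, ContDiff ℝ ∞ (e i))
    (hw : ContinuousOn w (sphere 0 1)) (hx : x ∈ ball 0 1) (u : Evec m) :
    ContinuousAt (fun x => poissonIntegral e w x u) x :=
  (superposable_poissonFamily he hw).continuousAt_superposition hx u

end PoissonIntegrals

section PolarCoordinates

/-- Continuous away from the origin and positively homogeneous of degree `d`. -/
structure PosHom (d : ℤ) (F : Evec m → ℝ) : Prop where
  continuousAt : ∀ x ≠ 0, ContinuousAt F x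
  map_smul : ∀ t : ℝ, 0 < t → ∀ x, F (t • x) = t ^ d * F x

variable {F G ρ Φ : Evec m → ℝ} {d e : ℤ}

lemma ne_zero_of_mem_sphere {ζ : Evec m} (hζ : ζ ∈ sphere (0 : Evec m) 1) : ζ ≠ 0 :=
  ne_zero_of_mem_unit_sphere ⟨ζ, hζ⟩

namespace PosHom

lemma add (hF : PosHom d F) (hG : PosHom d G) : PosHom d fun x => F x + G x where
  continuousAt x hx := (hF.continuousAt x hx).add (hG.continuousAt x hx)
  map_smul t ht x := by rw [hF.map_smul t ht, hG.map_smul t ht, mul_add]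

lemma mul (hF : PosHom d F) (hG : PosHom e G) : PosHom (d + e) fun x => F x * G x where
  continuousAt x hx := (hF.continuousAt x hx).mul (hG.continuousAt x hx)
  map_smul t ht x := by
    rw [hF.map_smul t ht, hG.map_smul t ht, zpow_add₀ ht.ne', mul_mul_mul_comm]

lemma pow (hF : PosHom d F) (n : ℕ) : PosHom (d * n) fun x => F x ^ n where
  continuousAt x hx := (hF.continuousAt x hx).pow n
  map_smul t ht x := by rw [hF.map_smul t ht, mul_pow, zpow_mul, zpow_natCast]

lemma inv (hF : PosHom d F) (h0 : ∀ x ≠ 0, F x ≠ 0) : PosHom (-d) fun x => (F x)⁻¹ where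
  continuousAt x hx := (hF.continuousAt x hx).inv₀ (h0 x hx)
  map_smul t ht x := by rw [hF.map_smul t ht, mul_inv, zpow_neg]

lemma continuousOn_sphere (hF : PosHom d F) : ContinuousOn F (sphere 0 1) := fun ζ hζ =>
  (hF.continuousAt ζ (ne_zero_of_mem_sphere hζ)).continuousWithinAt

lemma eq_norm_zpow_mul (hF : PosHom d F) {x : Evec m} (hx : x ≠ 0) :
    F x = ‖x‖ ^ d * F (‖x‖⁻¹ • x) := by
  rw [← hF.map_smul _ (norm_pos_iff.2 hx), smul_inv_smul₀ (norm_ne_zero_iff.2 hx)]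

lemma aestronglyMeasurable (hF : PosHom d F) (hm : 0 < m) : AEStronglyMeasurable F := by
  have : Nonempty (Fin m) := ⟨⟨0, hm⟩⟩
  have h : ContinuousOn F {0}ᶜ := fun x hx => (hF.continuousAt x hx).continuousWithinAt
  simpa [restrict_compl_singleton] using
    h.aestronglyMeasurable (μ := volume) (measurableSet_singleton 0).compl

lemma exists_bound (hΦ : PosHom 0 Φ) : ∃ C, ∀ x ≠ 0, ‖Φ x‖ ≤ C := by
  obtain ⟨C, hC⟩ := (isCompact_sphere (0 : Evec m) 1).exists_bound_of_continuousOn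
    hΦ.continuousOn_sphere
  refine ⟨C, fun x hx => ?_⟩
  rw [hΦ.eq_norm_zpow_mul hx, zpow_zero, one_mul]
  exact hC _ (by simp [norm_smul, hx])

lemma bounded_lt_one (hρ : PosHom 1 ρ) (hpos : ∀ x ≠ 0, 0 < ρ x) :
    Bornology.IsBounded {x | ρ x < 1} := by
  obtain ⟨c, hc, hcρ⟩ := (isCompact_sphere (0 : Evec m) 1).exists_forall_le'
    hρ.continuousOn_sphere (a := 0) fun ζ hζ => hpos ζ (ne_zero_of_mem_sphere hζ)
  refine (isBounded_closedBall (x := (0 : Evec m)) (r := c⁻¹)).subset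
    fun x (hx : ρ x < 1) => ?_
  rcases eq_or_ne x 0 with rfl | h0
  · simp [hc.le]
  · have h := hcρ (‖x‖⁻¹ • x) (by simp [norm_smul, h0])
    rw [hρ.eq_norm_zpow_mul h0, zpow_one] at hx
    rw [mem_closedBall_zero_iff, ← one_div, le_div_iff₀ hc]
    exact (mul_le_mul_of_nonneg_left h (norm_nonneg x)).trans hx.le

lemma integrableOn_lt_one (hm : 0 < m) (hρ : PosHom 1 ρ) (hpos : ∀ x ≠ 0, 0 < ρ x)
    (hΦ : PosHom 0 Φ) : IntegrableOn Φ {x | ρ x < 1} := by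
  have : Nonempty (Fin m) := ⟨⟨0, hm⟩⟩
  obtain ⟨C, hC⟩ := hΦ.exists_bound
  refine Measure.integrableOn_of_bounded (hρ.bounded_lt_one hpos).measure_lt_top.ne
    (hΦ.aestronglyMeasurable hm) (M := C) (ae_restrict_of_ae ?_)
  filter_upwards [compl_mem_ae_iff.2 (measure_singleton (0 : Evec m))] with x hx using hC x hx

end PosHom

lemma posHom_norm : PosHom 1 (norm : Evec m → ℝ) where
  continuousAt _ _ := continuous_norm.continuousAt
  map_smul t ht x := by simp [norm_smul, abs_of_pos ht]

lemma posHom_inner (a : Evec m) : PosHom 1 fun x => ⟪x, a⟫ where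
  continuousAt _ _ := by fun_prop
  map_smul t _ x := by rw [inner_smul_left, RCLike.conj_to_real, zpow_one]

lemma posHom_invPow : PosHom (-m) (invPow : Evec m → ℝ) := by
  have h := ((posHom_norm (m := m)).pow m).inv fun x hx => pow_ne_zero m (norm_ne_zero_iff.2 hx)
  rwa [one_mul] at h

lemma integral_eq_integral_polar (hm : 0 < m) {f : Evec m → ℝ} (hf : Integrable f) :
    ∫ z, f z = ∫ ζ, (∫ r : Set.Ioi (0 : ℝ), f (r.1 • ζ) ∂Measure.volumeIoiPow (m - 1))
      ∂sphereM m := by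
  have : Nonempty (Fin m) := ⟨⟨0, hm⟩⟩
  have h := (volume : Measure (Evec m)).measurePreserving_homeomorphUnitSphereProd
  have hemb := (homeomorphUnitSphereProd (Evec m)).measurableEmbedding
  set g : sphere (0 : Evec m) 1 × Set.Ioi (0 : ℝ) → ℝ := fun p => f (p.2.1 • p.1.1) with hg
  have hcomp : g ∘ homeomorphUnitSphereProd (Evec m) = fun z : ({0}ᶜ : Set (Evec m)) => f z := by
    funext z
    have hz : ‖z.1‖ ≠ 0 := norm_ne_zero_iff.2 z.2
    simp [hg, smul_smul, hz]
  rw [finrank_euclideanSpace_fin] at h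
  have hgi : Integrable g ((volume : Measure (Evec m)).toSphere.prod (.volumeIoiPow (m - 1))) := by
    rw [← h.integrable_comp_emb hemb, hcomp]
    exact (integrableOn_iff_comap_subtypeVal (measurableSet_singleton _).compl).1
      hf.integrableOn
  calc ∫ z, f z = ∫ z : ({0}ᶜ : Set (Evec m)), f z
          ∂(volume : Measure (Evec m)).comap Subtype.val := by
        rw [integral_subtype_comap (measurableSet_singleton _).compl f, restrict_compl_singleton]
    _ = _ := by
        rw [← hcomp]
        refine (h.integral_comp hemb g).trans ?_
        rw [integral_prod _ hgi, sphereM, measurableEmbedding_sphere.integral_map]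

lemma setIntegral_lt_one_eq_integral_sphereM (hm : 0 < m) (hρ : PosHom 1 ρ)
    (hpos : ∀ x ≠ 0, 0 < ρ x) (hΦ : PosHom 0 Φ) :
    ∫ z in {z | ρ z < 1}, Φ z = (m : ℝ)⁻¹ * ∫ ζ, (ρ ζ ^ m)⁻¹ * Φ ζ ∂sphereM m := by
  have hmeas : NullMeasurableSet {z | ρ z < 1} (volume : Measure (Evec m)) :=
    nullMeasurableSet_lt (hρ.aestronglyMeasurable hm).aemeasurable aemeasurable_const
  rw [← integral_indicator₀ hmeas, integral_eq_integral_polar hm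
    ((hρ.integrableOn_lt_one hm hpos hΦ).integrable_indicator₀ hmeas),
    ← integral_const_mul]
  refine integral_sphereM_congr fun ζ hζ => ?_
  have hρζ := hpos ζ (ne_zero_of_mem_sphere hζ)
  have hmem : (ρ ζ)⁻¹ ∈ Set.Ioi (0 : ℝ) := inv_pos.2 hρζ
  have hray : (fun r : Set.Ioi (0 : ℝ) => {z | ρ z < 1}.indicator Φ (r.1 • ζ)) =
      (Set.Iio ⟨(ρ ζ)⁻¹, hmem⟩).indicator fun _ => Φ ζ := by
    funext ⟨r, hr⟩
    simp only [Set.indicator_apply, Set.mem_ofPred_eq, Set.mem_Iio, Subtype.mk_lt_mk,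
      hρ.map_smul r hr, hΦ.map_smul r hr, zpow_one, zpow_zero, one_mul, ← one_div,
      lt_div_iff₀ hρζ]
  simp only [hray]
  rw [integral_indicator_const _ measurableSet_Iio, Measure.real,
    Measure.volumeIoiPow_apply_Iio, ENNReal.toReal_ofReal (by positivity),
    Nat.cast_pred hm, sub_add_cancel, Nat.sub_add_cancel hm, smul_eq_mul, inv_pow]
  ring

lemma setIntegral_ball_eq_integral_sphereM (hm : 0 < m) (hΦ : PosHom 0 Φ) :
    ∫ z in ball 0 1, Φ z = (m : ℝ)⁻¹ * ∫ ζ, Φ ζ ∂sphereM m := by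
  have h : ball (0 : Evec m) 1 = {z | ‖z‖ < 1} := by ext; simp
  rw [h, setIntegral_lt_one_eq_integral_sphereM hm posHom_norm (fun x hx => norm_pos_iff.2 hx) hΦ]
  congr 1
  exact integral_sphereM_congr fun ζ hζ => by simp [mem_sphere_zero_iff_norm.1 hζ]

lemma integral_sphereM_eq_zero_of_odd (hm : 0 < m) (hΦ : PosHom 0 Φ)
    (hodd : ∀ x, Φ (-x) = -Φ x) : ∫ ζ, Φ ζ ∂sphereM m = 0 := by
  have h : ∫ z in ball 0 1, Φ z = -∫ z in ball 0 1, Φ z := by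
    rw [← integral_neg]
    simp only [← hodd]
    rw [← integral_indicator measurableSet_ball, ← integral_indicator measurableSet_ball,
      ← integral_neg_eq_self]
    simp [Set.indicator]
  rw [setIntegral_ball_eq_integral_sphereM hm hΦ, self_eq_neg] at h
  simpa [hm.ne'] using h

end PolarCoordinates

section CentralProjection

variable {x y : Evec m} {F Ψ : Evec m → ℝ}

/-- The map `r ζ ↦ r (ζ - x)`, `ζ` a unit vector: for `‖x‖ < 1` it stretches the unit ball into
the cone-like region on which central projection from `x` becomes radial projection from `0`. -/
def radialShift (x y : Evec m) : Evec m := y - ‖y‖ • x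

lemma radialShift_smul {t : ℝ} (ht : 0 < t) (x y : Evec m) :
    radialShift x (t • y) = t • radialShift x y := by
  simp [radialShift, norm_smul, abs_of_pos ht, smul_sub, smul_smul]

lemma radialShift_of_mem_sphere (x : Evec m) {ζ : Evec m} (hζ : ζ ∈ sphere (0 : Evec m) 1) :
    radialShift x ζ = ζ - x := by
  rw [radialShift, mem_sphere_zero_iff_norm.1 hζ, one_smul]

lemma continuous_radialShift (x : Evec m) : Continuous (radialShift x) := by
  unfold radialShift; fun_prop

lemma radialShift_injective (hx : ‖x‖ < 1) : Function.Injective (radialShift x) := by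
  intro y z hyz
  have hsub : y - z = (‖y‖ - ‖z‖) • x := by
    rw [sub_smul, sub_eq_sub_iff_sub_eq_sub]; exact hyz
  have hle : |‖y‖ - ‖z‖| ≤ |‖y‖ - ‖z‖| * ‖x‖ := by
    simpa only [hsub, norm_smul, Real.norm_eq_abs] using abs_norm_sub_norm_le y z
  have h0 : ‖y‖ - ‖z‖ = 0 := abs_eq_zero.1 (by nlinarith [abs_nonneg (‖y‖ - ‖z‖)])
  rwa [h0, zero_smul, sub_eq_zero] at hsub

lemma radialShift_zero_right (x : Evec m) : radialShift x 0 = 0 := by simp [radialShift]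

lemma radialShift_ne_zero (hx : ‖x‖ < 1) (hy : y ≠ 0) : radialShift x y ≠ 0 := fun h =>
  hy (radialShift_injective hx (h.trans (radialShift_zero_right x).symm))

lemma radialShift_surjective (hx : ‖x‖ < 1) : Function.Surjective (radialShift x) := fun z => by
  have hpos : 0 < 1 - ‖x‖ := sub_pos.2 hx
  set b := ‖z‖ / (1 - ‖x‖) with hb
  have hb0 : 0 ≤ b := by positivity
  have hend : ‖z + b • x‖ - b ≤ 0 := by
    have := norm_add_le z (b • x)
    rw [norm_smul, Real.norm_of_nonneg hb0] at this
    have hz : ‖z‖ = b * (1 - ‖x‖) := by rw [hb, div_mul_cancel₀ _ hpos.ne']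
    linarith
  obtain ⟨s, -, hs⟩ := intermediate_value_Icc' hb0
    (f := fun s => ‖z + s • x‖ - s) (by fun_prop) ⟨hend, by simp⟩
  exact ⟨z + s • x, by rw [radialShift, sub_eq_zero.1 hs, add_sub_cancel_right]⟩

lemma image_radialShift_compl_zero (hx : ‖x‖ < 1) : radialShift x '' {0}ᶜ = {0}ᶜ := by
  rw [Set.image_compl_eq ⟨radialShift_injective hx, radialShift_surjective hx⟩,
    Set.image_singleton, radialShift_zero_right]

/-- The Jacobian determinant of `radialShift x` at `y`. -/
def radialShiftJac (x y : Evec m) : ℝ := 1 - ⟪x, y⟫ * ‖y‖⁻¹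

lemma hasFDerivAt_radialShift (x : Evec m) (hy : y ≠ 0) :
    HasFDerivAt (radialShift x)
      (.id ℝ (Evec m) + (-‖y‖⁻¹ • innerSL ℝ y).smulRight x) y := by
  have hd : DifferentiableAt ℝ (radialShift x) y :=
    differentiableAt_id.sub ((differentiableAt_id.norm ℝ hy).smul_const x)
  refine hd.hasFDerivAt.congr_fderiv (ContinuousLinearMap.ext fun v => ?_)
  refine fderiv_apply_eq_of_curves hd ?_
  rintro Y rfl hY
  refine (hY.sub ((hasDerivAt_norm_comp hY hy).smul_const x)).congr_deriv ?_
  simp [sub_eq_add_neg, mul_comm]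

lemma det_fderiv_radialShift (x y : Evec m) :
    (ContinuousLinearMap.id ℝ (Evec m) + (-‖y‖⁻¹ • innerSL ℝ y).smulRight x).det =
      radialShiftJac x y := by
  have h := LinearMap.transvection.det (-‖y‖⁻¹ • innerSL ℝ y).toLinearMap x
  refine h.trans ?_
  simp [radialShiftJac, real_inner_comm, sub_eq_add_neg, mul_comm]

lemma radialShiftJac_pos (hx : ‖x‖ < 1) (y : Evec m) : 0 < radialShiftJac x y := by
  have h : |⟪x, y⟫ * ‖y‖⁻¹| ≤ ‖x‖ := by
    rw [abs_mul, abs_inv, abs_norm, ← div_eq_mul_inv]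
    exact div_le_of_le_mul₀ (norm_nonneg y) (norm_nonneg x) (abs_real_inner_le_norm x y)
  exact sub_pos.2 (((le_abs_self _).trans h).trans_lt hx)

lemma posHom_norm_radialShift (x : Evec m) : PosHom 1 fun y => ‖radialShift x y‖ where
  continuousAt _ _ := (continuous_radialShift x).norm.continuousAt
  map_smul t ht y := by simp [radialShift_smul ht, norm_smul, abs_of_pos ht]

lemma PosHom.comp_radialShift (hF : PosHom 0 F) (hx : ‖x‖ < 1) :
    PosHom 0 fun y => F (radialShift x y) * radialShiftJac x y where
  continuousAt y hy := by
    have hn : ‖y‖ ≠ 0 := norm_ne_zero_iff.2 hy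
    refine ((hF.continuousAt _ (radialShift_ne_zero hx hy)).comp
      (continuous_radialShift x).continuousAt).mul ?_
    unfold radialShiftJac
    fun_prop (disch := assumption)
  map_smul t ht y := by
    rw [radialShift_smul ht, hF.map_smul t ht, zpow_zero, one_mul, one_mul, radialShiftJac,
      radialShiftJac, inner_smul_right, norm_smul, Real.norm_of_nonneg ht.le]
    field_simp

lemma setIntegral_ball_eq_setIntegral_radialShift (hm : 0 < m) (F : Evec m → ℝ) (hx : ‖x‖ < 1) :
    ∫ z in ball 0 1, F z =
      ∫ y in {y | ‖radialShift x y‖ < 1}, F (radialShift x y) * radialShiftJac x y := by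
  have : Nonempty (Fin m) := ⟨⟨0, hm⟩⟩
  have hopen : IsOpen {y | ‖radialShift x y‖ < 1} :=
    isOpen_lt (continuous_radialShift x).norm continuous_const
  have h := integral_image_eq_integral_abs_det_fderiv_smul volume
    (measurableSet_singleton (0 : Evec m)).compl
    (fun y hy => (hasFDerivAt_radialShift x hy).hasFDerivWithinAt)
    (radialShift_injective hx).injOn ((ball 0 1).indicator F)
  rw [image_radialShift_compl_zero hx, restrict_compl_singleton] at h
  rw [← integral_indicator measurableSet_ball, ← integral_indicator hopen.measurableSet, h]
  refine integral_congr_ae (.of_forall fun y => ?_)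
  beta_reduce
  rw [det_fderiv_radialShift, abs_of_pos (radialShiftJac_pos hx y)]
  rcases lt_or_ge ‖radialShift x y‖ 1 with h1 | h1 <;> simp [h1, h1.not_gt, mul_comm]

lemma integral_sphereM_centralProjection (hm : 0 < m) (hF : PosHom 0 F) (hx : ‖x‖ < 1) :
    ∫ ζ, invPow (ζ - x) * F (ζ - x) * (1 - ⟪x, ζ⟫) ∂sphereM m = ∫ ζ, F ζ ∂sphereM m := by
  have h := setIntegral_lt_one_eq_integral_sphereM hm (posHom_norm_radialShift x)
    (fun y hy => norm_pos_iff.2 (radialShift_ne_zero hx hy)) (hF.comp_radialShift hx)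
  rw [← setIntegral_ball_eq_setIntegral_radialShift hm F hx,
    setIntegral_ball_eq_integral_sphereM hm hF] at h
  have hm0 : (m : ℝ)⁻¹ ≠ 0 := by positivity
  rw [mul_left_cancel₀ hm0 h]
  refine integral_sphereM_congr fun ζ hζ => ?_
  simp only [radialShift_of_mem_sphere x hζ, radialShiftJac, mem_sphere_zero_iff_norm.1 hζ,
    invPow, inv_one, mul_one, mul_assoc]

lemma fderiv_integral_sphereM_comp_sub {g : Evec m → ℝ} (hg : ∀ x ≠ 0, ContDiffAt ℝ ∞ g x)
    (v : Evec m) :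
    fderiv ℝ (fun x => ∫ ζ, g (ζ - x) * (1 - ⟪x, ζ⟫) ∂sphereM m) 0 v =
      -∫ ζ, fderiv ℝ g ζ v + g ζ * ⟪ζ, v⟫ ∂sphereM m := by
  have hgo : ContDiffOn ℝ ∞ g {0}ᶜ := fun x hx => (hg x hx).contDiffWithinAt
  have hmaps : Set.MapsTo (fun p : Evec m × Evec m => p.1 - p.2) (sphere 0 1 ×ˢ ball 0 1) {0}ᶜ :=
    fun p hp => sub_ne_zero.2 (sphere_disjoint_ball.ne_of_mem hp.1 hp.2)
  have hc : ContinuousOn (fun p : Evec m × Evec m => g (p.1 - p.2)) (sphere 0 1 ×ˢ ball 0 1) :=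
    hgo.continuousOn.comp (by fun_prop) hmaps
  have hc' : ContinuousOn (fun p : Evec m × Evec m => fderiv ℝ g (p.1 - p.2))
      (sphere 0 1 ×ˢ ball 0 1) :=
    (hgo.continuousOn_fderiv_of_isOpen isOpen_compl_singleton (by simp)).comp (by fun_prop) hmaps
  have hd : ∀ ζ ∈ sphere (0 : Evec m) 1, ∀ x ∈ ball (0 : Evec m) 1,
      HasFDerivAt (fun x => g (ζ - x) * (1 - ⟪x, ζ⟫))
        (-((1 - ⟪x, ζ⟫) • fderiv ℝ g (ζ - x) + g (ζ - x) • innerSL ℝ ζ)) x := fun ζ hζ x hx => by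
    have hgζ : HasFDerivAt g (fderiv ℝ g (ζ - x)) (ζ - x) :=
      ((hg _ (hmaps (x := (ζ, x)) ⟨hζ, hx⟩)).differentiableAt (by simp)).hasFDerivAt
    have h1 := hgζ.comp x (f := fun x => ζ - x) ((hasFDerivAt_id x).const_sub ζ)
    rw [ContinuousLinearMap.comp_neg, ContinuousLinearMap.comp_id] at h1
    have h2 : HasFDerivAt (fun x : Evec m => 1 - ⟪x, ζ⟫) (-innerSL ℝ ζ) x := by
      simpa [real_inner_comm] using (innerSL ℝ ζ).hasFDerivAt.const_sub 1
    refine (h1.mul h2).congr_fderiv ?_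
    simp only [smul_neg, neg_add_rev, Function.comp_apply]
  have hinner : ContinuousOn (fun p : Evec m × Evec m => 1 - ⟪p.2, p.1⟫)
      (sphere 0 1 ×ˢ ball 0 1) := by fun_prop
  have hsl : ContinuousOn (fun p : Evec m × Evec m => innerSL ℝ p.1)
      (sphere 0 1 ×ˢ ball 0 1) := by fun_prop
  have hG' := ((hinner.smul hc').add (hc.smul hsl)).neg
  have hint := integrable_sphereM (hG'.comp (f := fun ζ : Evec m => (ζ, (0 : Evec m)))
    (by fun_prop) fun ζ hζ => ⟨hζ, mem_ball_self one_pos⟩)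
  rw [(hasFDerivAt_integral_sphereM isOpen_ball (hc.mul hinner) hG' hd
    (mem_ball_self one_pos)).fderiv, ← integral_neg]
  refine (ContinuousLinearMap.integral_apply hint v).trans ?_
  simp

lemma fderiv_inv_norm_mul_add {ζ : Evec m} (hζ : ζ ∈ sphere (0 : Evec m) 1)
    (hΨ : DifferentiableAt ℝ Ψ ζ) (v : Evec m) :
    fderiv ℝ (fun y => ‖y‖⁻¹ * Ψ y) ζ v + ‖ζ‖⁻¹ * Ψ ζ * ⟪ζ, v⟫ = fderiv ℝ Ψ ζ v := by
  have h0 := ne_zero_of_mem_sphere hζ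
  have hn := norm_ne_zero_iff.2 h0
  have h : fderiv ℝ (fun y => ‖y‖⁻¹ * Ψ y) ζ v = -⟪ζ, v⟫ * Ψ ζ + fderiv ℝ Ψ ζ v := by
    refine fderiv_apply_eq_of_curves
      (((differentiableAt_id.norm ℝ h0).inv hn).mul hΨ) ?_
    rintro X rfl hX
    refine (((hasDerivAt_norm_comp hX h0).inv hn).mul
      (hΨ.hasFDerivAt.comp_hasDerivAt 0 hX)).congr_deriv ?_
    simp [mem_sphere_zero_iff_norm.1 hζ]
  rw [h, mem_sphere_zero_iff_norm.1 hζ]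
  ring

/-- The infinitesimal form of `integral_sphereM_centralProjection` at `x = 0`. -/
lemma integral_sphereM_fderiv_eq_zero (hm : 0 < m) (hΨ : PosHom (1 - m) Ψ)
    (hs : ∀ x ≠ 0, ContDiffAt ℝ ∞ Ψ x) (v : Evec m) : ∫ ζ, fderiv ℝ Ψ ζ v ∂sphereM m = 0 := by
  set g : Evec m → ℝ := fun y => ‖y‖⁻¹ * Ψ y
  have hg : ∀ x ≠ 0, ContDiffAt ℝ ∞ g x := fun x hx =>
    ((contDiffAt_norm ℝ hx).inv (norm_ne_zero_iff.2 hx)).mul (hs x hx)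
  have hF : PosHom 0 fun y => ‖y‖ ^ m * g y := by
    have h := (posHom_norm.pow m).mul
      ((posHom_norm.inv fun _ hx => norm_ne_zero_iff.2 hx).mul hΨ)
    rwa [show (1 : ℤ) * m + (-1 + (1 - m)) = 0 by ring] at h
  have hconst : ∀ x ∈ ball (0 : Evec m) 1, ∫ ζ, g (ζ - x) * (1 - ⟪x, ζ⟫) ∂sphereM m =
      ∫ ζ, ‖ζ‖ ^ m * g ζ ∂sphereM m := fun x hx => by
    rw [← integral_sphereM_centralProjection hm hF (mem_ball_zero_iff.1 hx)]
    refine integral_sphereM_congr fun ζ hζ => ?_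
    have h0 : ‖ζ - x‖ ≠ 0 := norm_sub_eq_zero_iff.not.2 (sphere_disjoint_ball.ne_of_mem hζ hx)
    simp only [invPow]
    rw [inv_mul_cancel_left₀ (pow_ne_zero m h0)]
  have h := fderiv_integral_sphereM_comp_sub hg v
  rw [(eventuallyEq_of_mem (ball_mem_nhds 0 one_pos) hconst).fderiv_eq, fderiv_fun_const,
    Pi.zero_apply, zero_apply, zero_eq_neg] at h
  exact (integral_sphereM_congr fun ζ hζ => fderiv_inv_norm_mul_add hζ
    ((hs ζ (ne_zero_of_mem_sphere hζ)).differentiableAt (by simp)) v).symm.trans h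

/-- The length of half the chord of the unit ball through `x` in the direction of `z`, times
`‖z‖`. -/
def halfChord (x z : Evec m) : ℝ := √(⟪z, x⟫ ^ 2 + (1 - ‖x‖ ^ 2) * ‖z‖ ^ 2)

lemma halfChord_pos (hx : ‖x‖ < 1) (hy : y ≠ 0) : 0 < halfChord x y := by
  have hx1 : 0 < 1 - ‖x‖ ^ 2 := by nlinarith [norm_nonneg x]
  have := norm_pos_iff.2 hy
  unfold halfChord
  positivity

lemma posHom_halfChord (x : Evec m) : PosHom 1 (halfChord x) where
  continuousAt _ _ := by unfold halfChord; fun_prop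
  map_smul t ht z := by
    simp only [halfChord, norm_smul, inner_smul_left, RCLike.conj_to_real, Real.norm_eq_abs,
      mul_pow, sq_abs]
    rw [mul_left_comm, ← mul_add, Real.sqrt_mul (sq_nonneg t), Real.sqrt_sq ht.le, zpow_one]

lemma halfChord_neg (x z : Evec m) : halfChord x (-z) = halfChord x z := by
  simp [halfChord]

lemma one_sub_inner_pos (hx : ‖x‖ < 1) {ζ : Evec m} (hζ : ζ ∈ sphere (0 : Evec m) 1) :
    0 < 1 - ⟪x, ζ⟫ := by
  have := real_inner_le_norm x ζ
  rw [mem_sphere_zero_iff_norm.1 hζ, mul_one] at this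
  linarith

lemma halfChord_sub (hx : ‖x‖ < 1) {ζ : Evec m} (hζ : ζ ∈ sphere (0 : Evec m) 1) :
    halfChord x (ζ - x) = 1 - ⟪x, ζ⟫ := by
  rw [halfChord, Real.sqrt_eq_iff_mul_self_eq_of_pos (one_sub_inner_pos hx hζ),
    norm_sub_sq_real, mem_sphere_zero_iff_norm.1 hζ, inner_sub_left,
    real_inner_self_eq_norm_sq, real_inner_comm ζ x]
  ring

/-- The Poisson kernel is the density of the central projection from `x`, up to a factor which is
the sum of `1` and an odd function of the direction. -/
lemma integral_poisson_mul_of_even (hm : 0 < m) (hF : PosHom 0 F) (heven : ∀ z, F (-z) = F z)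
    (hx : ‖x‖ < 1) :
    ∫ ζ, poisson ζ x * F (ζ - x) ∂sphereM m = ∫ ζ, F ζ ∂sphereM m := by
  have hodd : PosHom 0 fun z => F z * (⟪z, x⟫ * (halfChord x z)⁻¹) := by
    simpa using hF.mul ((posHom_inner x).mul
      ((posHom_halfChord x).inv fun z hz => (halfChord_pos hx hz).ne'))
  have hweight : ∀ ζ ∈ sphere (0 : Evec m) 1,
      (1 + ⟪ζ - x, x⟫ * (halfChord x (ζ - x))⁻¹) * (1 - ⟪x, ζ⟫) = 1 - ‖x‖ ^ 2 := fun ζ hζ => by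
    rw [halfChord_sub hx hζ, add_mul, inv_mul_cancel_right₀ (one_sub_inner_pos hx hζ).ne',
      inner_sub_left, real_inner_self_eq_norm_sq, real_inner_comm ζ x]
    ring
  calc ∫ ζ, poisson ζ x * F (ζ - x) ∂sphereM m
    _ = ∫ ζ, invPow (ζ - x) * (F (ζ - x) + F (ζ - x) *
          (⟪ζ - x, x⟫ * (halfChord x (ζ - x))⁻¹)) * (1 - ⟪x, ζ⟫) ∂sphereM m :=
        integral_sphereM_congr fun ζ hζ => by
          simp only [poisson, ← hweight ζ hζ, invPow, norm_sub_rev x ζ]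
          ring
    _ = ∫ ζ, F ζ + F ζ * (⟪ζ, x⟫ * (halfChord x ζ)⁻¹) ∂sphereM m :=
        integral_sphereM_centralProjection hm (hF.add hodd) hx
    _ = ∫ ζ, F ζ ∂sphereM m := by
        rw [integral_add (integrable_sphereM hF.continuousOn_sphere)
          (integrable_sphereM hodd.continuousOn_sphere),
          integral_sphereM_eq_zero_of_odd hm hodd fun z => ?_, add_zero]
        rw [heven, halfChord_neg, inner_neg_left]
        ring

end CentralProjection

section MeanOfReflections

variable {κ : ℝ} {k : ℕ} {q g : Evec m → ℝ} {D : Evec m → Evec m} {x : Evec m}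

lemma contDiffAt_fderiv_reflPull (hq : ContDiff ℝ ∞ q) (hx : x ≠ 0) (u v : Evec m) :
    ContDiffAt ℝ ∞ (fun y => fderiv ℝ (reflPull q y) u v) x := by
  have hr (w : Evec m) : ContDiffAt ℝ ∞ (fun y => reflv y w) x :=
    (contDiffAt_reflv hx w).comp x (f := fun y => (y, w)) (by fun_prop)
  simp only [fderiv_reflPull]
  exact ((contDiff_fderiv hq).contDiffAt.comp x (hr u)).clm_apply (hr v)

lemma posHom_reflPull (hq : ContDiff ℝ ∞ q) (u : Evec m) :
    PosHom 0 fun x => reflPull q x u where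
  continuousAt _ hx := (differentiableAt_reflPull hq hx u).continuousAt
  map_smul t ht x := by simp only [reflPull, reflv_smul ht.ne', zpow_zero, one_mul]

lemma posHom_fderiv_reflPull (hq : ContDiff ℝ ∞ q) (u v : Evec m) :
    PosHom 0 fun x => fderiv ℝ (reflPull q x) u v where
  continuousAt _ hx := (contDiffAt_fderiv_reflPull hq hx u v).continuousAt
  map_smul t ht x := by simp only [fderiv_reflPull, reflv_smul ht.ne', zpow_zero, one_mul]

lemma HarmHom.sum_fderiv_fderiv_reflPull (hq : HarmHom κ q) (hg : HasGradientAt g (D x) x)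
    (hx : x ≠ 0) (u : Evec m) :
    ∑ j, fderiv ℝ (fun y => g y * fderiv ℝ (reflPull q y) u (ev j)) x (ev j) =
      fderiv ℝ (reflPull q x) u (D x + (2 * invSq x * (m + κ - 2) * g x) • x) := by
  have hp : HarmHom κ (reflPull q x) := hq.reflPull x
  have hterm (j : Fin m) :
      fderiv ℝ (fun y => g y * fderiv ℝ (reflPull q y) u (ev j)) x (ev j) =
        ⟪D x, ev j⟫ * fderiv ℝ (reflPull q x) u (ev j) +
        g x * fderiv ℝ (fun w => fderiv ℝ (reflPull q x) w (reflGen x (ev j) w)) u (ev j) := by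
    rw [fderiv_fun_mul hg.differentiableAt
      (differentiableAt_fderiv_reflPull hq.contDiff (differentiableAt_const _) hx u),
      hg.hasFDerivAt.fderiv, fderiv_fderiv_apply_clm hp.contDiff, hess_symm hp.contDiff]
    simp only [add_apply, smul_apply, smul_eq_mul, InnerProductSpace.toDual_apply_apply,
      fderiv_fderiv_reflPull hq.contDiff (differentiableAt_const (ev j)) hx, fderiv_fun_const,
      Pi.zero_apply, zero_apply, add_zero]
    ring
  simp only [hterm, Finset.sum_add_distrib, ← Finset.mul_sum, hp.sum_fderiv_reflGen,
    sum_inner_ev_mul_map, map_add, map_smul, smul_eq_mul]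
  ring

/-- The components of a tangential field whose divergence on the sphere relates the means of
`q ∘ R_ζ` and of its derivatives. -/
def meanField (q : Evec m → ℝ) (u : Evec m) (j : Fin m) : Evec m → ℝ := fun x =>
  kelvinPot 0 u x * fderiv ℝ (reflPull q x) u (ev j)

lemma contDiffAt_meanField (hq : ContDiff ℝ ∞ q) (hx : x ≠ 0) (u : Evec m) (j : Fin m) :
    ContDiffAt ℝ ∞ (meanField q u j) x :=
  ((contDiffAt_kelvinPot hx).comp x (f := fun y => (u, y)) (by fun_prop)).mul
    (contDiffAt_fderiv_reflPull hq hx u (ev j))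

lemma posHom_meanField (hq : ContDiff ℝ ∞ q) (u : Evec m) (j : Fin m) :
    PosHom (1 - m) (meanField q u j) := by
  have hg : PosHom (1 + -m) fun x => kelvinPot 0 u x := by
    simpa only [kelvinPot, zero_mul, zero_add, real_inner_comm u] using
      (posHom_inner u).mul posHom_invPow
  have h := hg.mul (posHom_fderiv_reflPull hq u (ev j))
  simp only [add_zero, ← sub_eq_add_neg] at h
  exact h

lemma HarmHom.two_mul_sum_fderiv_meanField (hq : HarmHom κ q) {ζ : Evec m}
    (hζ : ζ ∈ sphere (0 : Evec m) 1) (u : Evec m) :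
    2 * ∑ j, fderiv ℝ (meanField q u j) ζ (ev j) =
      κ * (m + 2 * κ - 2) * reflPull q ζ u -
        (m + 2 * κ - 4) * reflPull (dirDeriv u q) ζ u := by
  have h0 := ne_zero_of_mem_sphere hζ
  have h1 : ‖ζ‖ = 1 := mem_sphere_zero_iff_norm.1 hζ
  have href : reflPull (dirDeriv u q) ζ u =
      κ * reflPull q ζ u - 2 * ⟪u, ζ⟫ * fderiv ℝ (reflPull q ζ) u ζ := by
    have h := fderiv_reflPull q ζ u (reflv ζ u)
    rw [reflv_reflv, reflv_eq, map_sub, (hq.reflPull ζ).euler, map_smul] at h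
    simpa [reflPull, dirDeriv, reflv_eq, invSq, h1,
      real_inner_comm u] using h.symm
  have hsum : ∑ j, fderiv ℝ (meanField q u j) ζ (ev j) = _ :=
    hq.sum_fderiv_fderiv_reflPull (hasGradientAt_kelvinPot h0) h0 u
  rw [href, hsum]
  simp only [kelvinField, kelvinPot, invSq, invPow, h1, map_add, map_smul, smul_eq_mul, one_pow,
    inv_one, (hq.reflPull ζ).euler]
  ring

lemma HarmHom.integral_reflPull_dirDeriv (hm : 0 < m) (hq : HarmHom κ q) (u : Evec m) :
    κ * (m + 2 * κ - 2) * ∫ ζ, reflPull q ζ u ∂sphereM m =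
      (m + 2 * κ - 4) * ∫ ζ, reflPull (dirDeriv u q) ζ u ∂sphereM m := by
  have hint {p : Evec m → ℝ} (hp : ContDiff ℝ ∞ p) :
      Integrable (fun ζ => reflPull p ζ u) (sphereM m) :=
    integrable_sphereM (posHom_reflPull hp u).continuousOn_sphere
  have hdiv (j : Fin m) :
      Integrable (fun ζ => fderiv ℝ (meanField q u j) ζ (ev j)) (sphereM m) :=
    integrable_sphereM fun ζ hζ =>
      (((contDiffAt_meanField hq.contDiff (ne_zero_of_mem_sphere hζ) u j).fderiv_right
        (m := ∞) (by simp)).clm_apply contDiffAt_const).continuousAt.continuousWithinAt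
  have h0 : ∫ ζ, 2 * ∑ j, fderiv ℝ (meanField q u j) ζ (ev j) ∂sphereM m = 0 := by
    rw [integral_const_mul, integral_finsetSum _ fun j _ => hdiv j]
    simp only [integral_sphereM_fderiv_eq_zero hm (posHom_meanField hq.contDiff u _)
      fun _ hx => contDiffAt_meanField hq.contDiff hx u _, Finset.sum_const_zero, mul_zero]
  rw [integral_sphereM_congr fun ζ hζ => hq.two_mul_sum_fderiv_meanField hζ u,
    integral_sub ((hint hq.contDiff).const_mul _)
      ((hint (hq.dirDeriv u).contDiff).const_mul _), integral_const_mul, integral_const_mul] at h0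
  exact sub_eq_zero.1 h0

lemma HarmHom.eq_apply_zero (hq : HarmHom 0 q) (y : Evec m) : q y = q 0 := by
  have hd (t : ℝ) : HasDerivAt (fun t : ℝ => q (t • y)) (fderiv ℝ q (t • y) y) t := by
    simpa [Function.comp_def] using (hq.contDiff.differentiable (by simp)
      (t • y)).hasFDerivAt.comp_hasDerivAt t ((hasDerivAt_id t).smul_const y)
  obtain ⟨t, ht, h⟩ := exists_hasDerivAt_eq_slope (fun t : ℝ => q (t • y)) _ zero_lt_one
    (fun t _ => (hd t).continuousAt.continuousWithinAt) fun t _ => hd t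
  have h0 : fderiv ℝ q (t • y) y = 0 := by
    have := hq.euler (t • y)
    rw [zero_mul, map_smul, smul_eq_zero] at this
    exact this.resolve_left ht.1.ne'
  simpa [h0, sub_eq_zero] using h.symm

lemma HarmHom.integral_reflPull (hm : 0 < m) (hq : HarmHom k q) (u : Evec m) :
    (m + 2 * k - 2) * ∫ ζ, reflPull q ζ u ∂sphereM m = omegaS m * (m - 2) * q u := by
  induction k generalizing q with
  | zero =>
    rw [Nat.cast_zero] at hq ⊢
    simp only [reflPull, hq.eq_apply_zero (reflv _ _), hq.eq_apply_zero u,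
      integral_const, smul_eq_mul, omegaS, Measure.real]
    ring
  | succ k ih =>
    have hd : HarmHom k (dirDeriv u q) := by simpa using hq.dirDeriv u
    have hk : ((k + 1 : ℕ) : ℝ) ≠ 0 := by positivity
    have hrec := hq.integral_reflPull_dirDeriv hm u
    have hmean := ih hd
    rw [dirDeriv.eq_1 u q u, hq.euler] at hmean
    refine mul_left_cancel₀ hk ?_
    push_cast at hrec hmean ⊢
    linear_combination hrec + hmean

end MeanOfReflections

section SphericalHarmonics

variable {k : ℕ} {p : Evec m → ℝ}

lemma _root_.IsHk.contDiff (hp : IsHk m k p) : ContDiff ℝ ∞ p := by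
  obtain ⟨P, hP⟩ := hp.1
  rw [funext hP]
  simp only [MvPolynomial.eval_eq]
  fun_prop

lemma _root_.IsHk.harmHom (hp : IsHk m k p) : HarmHom k p where
  contDiff := hp.contDiff
  euler y := by
    have h1 := ((hp.contDiff.differentiable (by simp) ((1 : ℝ) • y)).hasFDerivAt.comp_hasDerivAt
      (1 : ℝ) ((hasDerivAt_id (1 : ℝ)).smul_const y))
    simp only [Function.comp_def, id_eq, hp.2.1, one_smul] at h1
    simpa using h1.unique ((hasDerivAt_pow k (1 : ℝ)).mul_const (p y))
  harmonic y := by rw [laplacian_eq_lapl hp.contDiff, hp.2.2]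

/-- The space of homogeneous polynomial functions of degree `k`. -/
def homPoly (m k : ℕ) : Submodule ℝ (Evec m → ℝ) :=
  (MvPolynomial.homogeneousSubmodule (Fin m) ℝ k).map
    (MvPolynomial.aeval fun (i : Fin m) (x : Evec m) => x i).toLinearMap

lemma mem_homPoly : p ∈ homPoly m k ↔
    ∃ P : MvPolynomial (Fin m) ℝ, P.IsHomogeneous k ∧ ∀ x, p x = P.eval fun i => x i := by
  have h (P : MvPolynomial (Fin m) ℝ) (x : Evec m) :
      MvPolynomial.aeval (fun (i : Fin m) (x : Evec m) => x i) P x = P.eval fun i => x i := by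
    simpa [MvPolynomial.aeval_eq_eval] using DFunLike.congr_fun (MvPolynomial.comp_aeval
      (fun (i : Fin m) (x : Evec m) => x i) (Pi.evalAlgHom ℝ (fun _ : Evec m => ℝ) x)) P
  simp only [homPoly, Submodule.mem_map, MvPolynomial.mem_homogeneousSubmodule,
    AlgHom.toLinearMap_apply, funext_iff, h, eq_comm (b := p _)]

instance : FiniteDimensional ℝ (homPoly m k) :=
  .of_fg ((MvPolynomial.homogeneousSubmodule_fg (Fin m) ℝ k).map _)

lemma eval_smul_of_isHomogeneous {σ R : Type*} [CommSemiring R] {P : MvPolynomial σ R}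
    (hP : P.IsHomogeneous k) (c : R) (x : σ → R) : P.eval (c • x) = c ^ k * P.eval x := by
  simp only [MvPolynomial.eval_eq, Finset.mul_sum]
  refine Finset.sum_congr rfl fun d hd => ?_
  have hdeg : ∑ i ∈ d.support, d i = k := by
    simpa [Finsupp.weight_apply, Finsupp.sum] using hP (MvPolynomial.mem_support_iff.1 hd)
  simp only [Pi.smul_apply, smul_eq_mul, mul_pow, Finset.prod_mul_distrib,
    Finset.prod_pow_eq_pow_sum, hdeg]
  ring

lemma apply_smul_of_mem_homPoly (hp : p ∈ homPoly m k) (c : ℝ) (x : Evec m) :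
    p (c • x) = c ^ k * p x := by
  obtain ⟨P, hP, h⟩ := mem_homPoly.1 hp
  rw [h, h]
  exact eval_smul_of_isHomogeneous hP c x

lemma eq_zero_of_mem_homPoly (hp : p ∈ homPoly m k)
    (h : ∀ x ∈ closedBall (0 : Evec m) 1, p x = 0) : p = 0 := by
  funext x
  have hx : 0 < 1 + ‖x‖ := by positivity
  have h1 := h ((1 + ‖x‖)⁻¹ • x) (by
    rw [mem_closedBall_zero_iff, norm_smul, Real.norm_of_nonneg (by positivity), inv_mul_le_one₀ hx]
    linarith)
  rw [apply_smul_of_mem_homPoly hp] at h1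
  exact (mul_eq_zero.1 h1).resolve_left (by positivity)

lemma eval_eq_eval_homogeneousComponent {σ R : Type*} [CommRing R] [IsDomain R] [Infinite R]
    {P : MvPolynomial σ R} {x : σ → R}
    (h : ∀ c : R, P.eval (c • x) = c ^ k * P.eval x) :
    P.eval x = (MvPolynomial.homogeneousComponent k P).eval x := by
  have hpoly : (∑ j ∈ Finset.range (P.totalDegree + 1),
      Polynomial.C ((MvPolynomial.homogeneousComponent j P).eval x) * Polynomial.X ^ j) =
      Polynomial.C (P.eval x) * Polynomial.X ^ k := by
    refine Polynomial.funext fun c => ?_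
    have hc := h c
    nth_rw 1 [← MvPolynomial.sum_homogeneousComponent P] at hc
    simp only [map_sum, eval_smul_of_isHomogeneous
      (MvPolynomial.homogeneousComponent_isHomogeneous _ P)] at hc
    simpa only [Polynomial.eval_finsetSum, Polynomial.eval_mul, Polynomial.eval_C,
      Polynomial.eval_pow, Polynomial.eval_X, mul_comm] using hc
  have hcoeff := congrArg (Polynomial.coeff · k) hpoly
  simp only [Polynomial.finsetSum_coeff, Polynomial.coeff_C_mul_X_pow, Finset.sum_ite_eq,
    Finset.mem_range, if_true] at hcoeff
  rw [← hcoeff, ite_eq_left_iff]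
  intro hk
  rw [MvPolynomial.homogeneousComponent_eq_zero _ _ (by lia), map_zero]

protected lemma _root_.IsHk.mem_homPoly (hp : IsHk m k p) : p ∈ homPoly m k := by
  obtain ⟨P, hP⟩ := hp.1
  refine mem_homPoly.2 ⟨_, MvPolynomial.homogeneousComponent_isHomogeneous k P, fun x => ?_⟩
  rw [hP, eval_eq_eval_homogeneousComponent fun c => ?_]
  rw [← hP, ← hp.2.1, hP]
  rfl

lemma exists_interpolation {X : Type*} {V : Submodule ℝ (X → ℝ)} [FiniteDimensional ℝ V]
    {S : Set X} (hS : ∀ f ∈ V, (∀ x ∈ S, f x = 0) → f = 0) :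
    ∃ (n : ℕ) (v : Fin n → X) (e : Fin n → X → ℝ), (∀ i, v i ∈ S) ∧ (∀ i, e i ∈ V) ∧
      ∀ f ∈ V, ∀ x, f x = ∑ i, f (v i) * e i x := by
  let δ (x : X) : Module.Dual ℝ V := (LinearMap.proj x).comp V.subtype
  obtain ⟨φ, hφ, hspan, -⟩ := Submodule.exists_fun_fin_finrank_span_eq ℝ (δ '' S)
  choose v hv hφv using hφ
  have hinj : LinearMap.ker (LinearMap.pi φ) = ⊥ := by
    refine LinearMap.ker_eq_bot'.2 fun f hf => Subtype.ext (hS f f.2 fun x hx => ?_)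
    have hle : Submodule.span ℝ (Set.range φ) ≤ LinearMap.ker (Module.Dual.eval ℝ V f) :=
      Submodule.span_le.2 (Set.range_subset_iff.2 fun i => congrFun hf i)
    exact hle (hspan.ge (Submodule.subset_span (Set.mem_image_of_mem δ hx)))
  obtain ⟨L, hL⟩ := LinearMap.exists_leftInverse_of_injective _ hinj
  refine ⟨_, v, fun i => L (Pi.single i 1), hv, fun i => (L (Pi.single i 1)).2, fun f hf x => ?_⟩
  have h := congrFun (congrArg Subtype.val (DFunLike.congr_fun hL ⟨f, hf⟩)) x
  rw [LinearMap.comp_apply, pi_eq_sum_univ' (LinearMap.pi φ ⟨f, hf⟩), map_sum] at h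
  simpa [← hφv, δ] using h.symm

lemma exists_interpolation_isHk (m k : ℕ) :
    ∃ (n : ℕ) (v : Fin n → Evec m) (e : Fin n → Evec m → ℝ),
      (∀ i, v i ∈ closedBall 0 1) ∧ (∀ i, HarmHom k (e i)) ∧
      ∀ q, IsHk m k q → ∀ u, q u = ∑ i, q (v i) * e i u := by
  obtain ⟨n, v, e, hv, he, h⟩ := exists_interpolation (V := homPoly m k ⊓ harmHom m k)
    (S := closedBall 0 1) fun f hf => eq_zero_of_mem_homPoly hf.1
  exact ⟨n, v, e, hv, fun i => (he i).2, fun q hq => h q ⟨hq.mem_homPoly, hq.harmHom⟩⟩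

end SphericalHarmonics

section BoundaryValues

variable {k : ℕ} {q : Evec m → ℝ} {x ζ₀ : Evec m} {ι : Type*} [Fintype ι]
  {e : ι → Evec m → ℝ} {w : Evec m → ι → ℝ} {Z h : Evec m → Evec m → ℝ}

lemma _root_.IsZk.apply_reflv (hZ : IsZk m k Z) (a u v : Evec m) :
    Z (reflv a u) v = Z u (reflv a v) := by
  simpa only [reflIso_apply, reflv_reflv] using hZ.2.2.2.2 (reflIso a) u (reflv a v)

lemma _root_.IsZk.integral_PB_mul (hZ : IsZk m k Z) (hq : IsHk m k q) {f : Evec m → ℝ}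
    (hf : Set.EqOn f q (sphere 0 1)) (x ζ ν : Evec m) :
    ∫ η, PB m k Z x ζ η ν * f η ∂sphereM m = cmk m k / 2 * poissonKer q ζ x ν := by
  have hPB : Set.EqOn (fun η => PB m k Z x ζ η ν * f η)
      (fun η => cmk m k / 2 * poisson ζ x * (Z η (reflv (x - ζ) ν) * q η)) (sphere 0 1) :=
    fun η hη => by
      simp only [PB, hZ.apply_reflv, hf hη, poisson, invPow, div_eq_mul_inv]
      ring
  rw [integral_sphereM_congr hPB, integral_const_mul, hZ.2.1 q hq, poissonKer, reflPull]
  ring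

lemma _root_.IsZk.PBint_eq_poissonIntegral (hZ : IsZk m k Z)
    (hh : ∀ ζ ∈ sphere (0 : Evec m) 1, ∃ q, IsHk m k q ∧ Set.EqOn (h ζ) q (closedBall 0 1))
    {v : ι → Evec m} (hv : ∀ i, v i ∈ closedBall 0 1)
    (he : ∀ q, IsHk m k q → ∀ u, q u = ∑ i, q (v i) * e i u) :
    PBint m k Z h = poissonIntegral e fun ζ => (cmk m k / 2) • fun i => h ζ (v i) := by
  funext x ν
  refine integral_sphereM_congr fun ζ hζ => ?_
  obtain ⟨q, hq, hhq⟩ := hh ζ hζ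
  have hcomb : Fintype.linearCombination ℝ e (fun i => h ζ (v i)) = q := by
    funext u
    simp only [linearCombination_apply_apply, hhq (hv _), he q hq u]
  simp only [hZ.integral_PB_mul hq (hhq.mono sphere_subset_closedBall), poissonFamily, map_smul,
    hcomb, poissonKer, reflPull, Pi.smul_apply, smul_eq_mul]
  ring

lemma omegaS_pos (hm : 0 < m) : 0 < omegaS m := by
  have : Nonempty (Fin m) := ⟨⟨0, hm⟩⟩
  rw [omegaS, sphereM, measurableEmbedding_sphere.map_apply, Set.preimage_univ]
  refine ENNReal.toReal_pos ?_ (measure_ne_top _ _)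
  rw [Measure.toSphere_apply_univ]
  exact mul_ne_zero (by simpa using hm.ne') (measure_ball_pos _ _ one_pos).ne'

lemma integral_poisson (hm : 0 < m) (hx : x ∈ ball 0 1) :
    ∫ ζ, poisson ζ x ∂sphereM m = omegaS m := by
  have h1 : PosHom 0 fun _ : Evec m => (1 : ℝ) := ⟨fun _ _ => continuousAt_const, by simp⟩
  simpa [omegaS, Measure.real] using
    integral_poisson_mul_of_even hm h1 (fun _ => rfl) (mem_ball_zero_iff.1 hx)

lemma integral_poissonKer (hm : 3 ≤ m) (hq : HarmHom k q) (hx : x ∈ ball 0 1) (ν : Evec m) :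
    cmk m k / 2 * ∫ ζ, poissonKer q ζ x ν ∂sphereM m = q ν := by
  have hm' : (3 : ℝ) ≤ m := by exact_mod_cast hm
  have heven (z : Evec m) : reflPull q (-z) ν = reflPull q z ν := by
    rw [reflPull, reflPull, reflv_neg]
  have hmean := hq.integral_reflPull (by lia) ν
  rw [← integral_poisson_mul_of_even (by lia) (posHom_reflPull hq.contDiff ν) heven
    (mem_ball_zero_iff.1 hx)] at hmean
  simp only [← heven (_ - x), neg_sub] at hmean
  have h1 := (omegaS_pos (m := m) (by lia)).ne'
  have h2 : (m : ℝ) - 2 ≠ 0 := by linarith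
  simp only [cmk, poissonKer]
  field_simp
  linear_combination hmean

lemma poisson_nonneg (hx : x ∈ ball 0 1) (ζ : Evec m) : 0 ≤ poisson ζ x := by
  have := mem_ball_zero_iff.1 hx
  exact mul_nonneg (by nlinarith [norm_nonneg x]) (by rw [invPow]; positivity)

lemma continuousOn_poisson (hx : x ∈ ball 0 1) :
    ContinuousOn (fun ζ => poisson ζ x) (sphere 0 1) := fun ζ hζ => by
  have h0 : x - ζ ≠ 0 := sub_ne_zero.2 (sphere_disjoint_ball.symm.ne_of_mem hx hζ)
  exact (continuousAt_const.mul ((contDiffAt_invPow h0).continuousAt.comp (x := ζ)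
    (g := invPow) (f := fun ζ => x - ζ) (by fun_prop))).continuousWithinAt

lemma tendstoUniformlyOn_poisson (hζ₀ : ζ₀ ∈ sphere 0 1) {U : Set (Evec m)} (hU : U ∈ 𝓝 ζ₀) :
    TendstoUniformlyOn (fun x ζ => poisson ζ x) 0 (𝓝[ball 0 1] ζ₀) (sphere 0 1 \ U) := by
  obtain ⟨r, hr, hrU⟩ := Metric.mem_nhds_iff.1 hU
  have hlim : Tendsto (fun x : Evec m => (1 - ‖x‖ ^ 2) * ((r / 2) ^ m)⁻¹) (𝓝[ball 0 1] ζ₀)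
      (𝓝 0) := by
    have hc : Continuous fun x : Evec m => (1 - ‖x‖ ^ 2) * ((r / 2) ^ m)⁻¹ := by fun_prop
    simpa [mem_sphere_zero_iff_norm.1 hζ₀] using (hc.tendsto ζ₀).mono_left nhdsWithin_le_nhds
  rw [Metric.tendstoUniformlyOn_iff]
  intro ε hε
  filter_upwards [hlim.eventually (gt_mem_nhds hε), self_mem_nhdsWithin,
    nhdsWithin_le_nhds (ball_mem_nhds ζ₀ (half_pos hr))] with x hxε hx hxr ζ hζ
  have hfar : r ≤ dist ζ ζ₀ := not_lt.1 fun hlt => hζ.2 (hrU hlt)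
  have hd : r / 2 ≤ ‖x - ζ‖ := by
    have := dist_triangle_left ζ ζ₀ x
    rw [mem_ball] at hxr
    rw [← dist_eq_norm]
    linarith
  have hnum : 0 ≤ 1 - ‖x‖ ^ 2 := by nlinarith [norm_nonneg x, mem_ball_zero_iff.1 hx]
  rw [Pi.zero_apply, dist_zero_left, Real.norm_of_nonneg (poisson_nonneg hx ζ)]
  refine lt_of_le_of_lt ?_ hxε
  rw [poisson, invPow]
  gcongr

lemma tendsto_integral_poisson_mul (hm : 0 < m) (hζ₀ : ζ₀ ∈ sphere 0 1) {g : Evec m → ℝ}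
    (hg : ContinuousOn g (sphere 0 1)) :
    Tendsto (fun x => ∫ ζ, poisson ζ x * g ζ ∂sphereM m) (𝓝[ball 0 1] ζ₀)
      (𝓝 (omegaS m * g ζ₀)) := by
  have hω := (omegaS_pos hm).ne'
  have hball : ∀ᶠ x in 𝓝[ball (0 : Evec m) 1] ζ₀, x ∈ ball (0 : Evec m) 1 :=
    self_mem_nhdsWithin
  have hs : MeasurableSet (sphere (0 : Evec m) 1) := isClosed_sphere.measurableSet
  have hpeak : Tendsto (fun x => ∫ ζ in sphere 0 1, ((omegaS m)⁻¹ * poisson ζ x) • g ζ ∂sphereM m)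
      (𝓝[ball 0 1] ζ₀) (𝓝 (g ζ₀)) := by
    refine tendsto_setIntegral_peak_smul_of_integrableOn_of_tendsto hs hs subset_rfl
      self_mem_nhdsWithin (measure_ne_top _ _) (hball.mono fun x hx ζ _ => ?_)
      (fun U hU h0 => ?_) ?_ (hball.mono fun x hx => ?_) ?_ (hg ζ₀ hζ₀)
    · exact mul_nonneg (inv_nonneg.2 (omegaS_pos hm).le) (poisson_nonneg hx ζ)
    · have h := (uniformContinuous_const_smul (omegaS m)⁻¹).comp_tendstoUniformlyOn
        (tendstoUniformlyOn_poisson hζ₀ (hU.mem_nhds h0))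
      rwa [show (fun b : ℝ => (omegaS m)⁻¹ • b) ∘ (0 : Evec m → ℝ) = 0 by funext; simp] at h
    · refine tendsto_const_nhds.congr' (hball.mono fun x hx => ?_)
      simp only [sphereM_restrict, integral_const_mul, integral_poisson hm hx, inv_mul_cancel₀ hω]
    · rw [sphereM_restrict]
      exact ((integrable_sphereM (continuousOn_poisson hx)).const_mul _).aestronglyMeasurable
    · rw [IntegrableOn, sphereM_restrict]
      exact integrable_sphereM hg
  simpa only [sphereM_restrict, smul_eq_mul, mul_assoc, integral_const_mul,
    mul_inv_cancel_left₀ hω] using hpeak.const_mul (omegaS m)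

lemma tendsto_integral_poisson_mul_zero (hm : 0 < m) (hζ₀ : ζ₀ ∈ sphere 0 1) {g : Evec m → ℝ}
    (hg : ContinuousOn g (sphere 0 1)) (hg0 : g ζ₀ = 0) {G : Evec m → Evec m → ℝ}
    (hG : ∀ ζ ∈ sphere 0 1, ∀ x, |G ζ x| ≤ g ζ) :
    Tendsto (fun x => ∫ ζ, poisson ζ x * G ζ x ∂sphereM m) (𝓝[ball 0 1] ζ₀) (𝓝 0) := by
  have hlim := tendsto_integral_poisson_mul hm hζ₀ hg
  rw [hg0, mul_zero] at hlim
  refine squeeze_zero_norm' (eventually_mem_nhdsWithin.mono fun x hx => ?_) hlim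
  refine norm_integral_le_of_norm_le
    (integrable_sphereM ((continuousOn_poisson hx).mul hg)) (ae_mem_sphere.mono fun ζ hζ => ?_)
  rw [norm_mul, Real.norm_of_nonneg (poisson_nonneg hx ζ)]
  exact mul_le_mul_of_nonneg_left (hG ζ hζ x) (poisson_nonneg hx ζ)

lemma poissonIntegral_sub (he : ∀ i, ContDiff ℝ ∞ (e i)) {w' : Evec m → ι → ℝ}
    (hw : ContinuousOn w (sphere 0 1)) (hw' : ContinuousOn w' (sphere 0 1)) (hx : x ∈ ball 0 1)
    (u : Evec m) :
    poissonIntegral e (w - w') x u = poissonIntegral e w x u - poissonIntegral e w' x u := by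
  simp only [poissonIntegral, superposition]
  rw [← integral_sub ((superposable_poissonFamily he hw).integrable hx u)
    ((superposable_poissonFamily he hw').integrable hx u)]
  simp only [poissonFamily, poissonKer, reflPull, Pi.sub_apply, map_sub, mul_sub]

lemma tendsto_poissonIntegral_zero (hm : 0 < m) (he : ∀ i, ContDiff ℝ ∞ (e i))
    (hw : ContinuousOn w (sphere 0 1)) (hζ₀ : ζ₀ ∈ sphere 0 1) (h0 : w ζ₀ = 0) (u : Evec m) :
    Tendsto (fun x => poissonIntegral e w x u) (𝓝[ball 0 1] ζ₀) (𝓝 0) := by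
  have hB (i : ι) := (isCompact_closedBall (0 : Evec m) ‖u‖).exists_bound_of_continuousOn
    (he i).continuous.continuousOn
  choose B hB using hB
  refine tendsto_integral_poisson_mul_zero (g := fun ζ => ∑ i, |w ζ i| * B i)
    (G := fun ζ x => reflPull (Fintype.linearCombination ℝ e (w ζ)) (x - ζ) u) hm hζ₀
    (by fun_prop) (by simp [h0]) fun ζ _ x => ?_
  rw [reflPull, linearCombination_apply_apply]
  refine (Finset.abs_sum_le_sum_abs _ _).trans (Finset.sum_le_sum fun i _ => ?_)
  rw [abs_mul]
  exact mul_le_mul_of_nonneg_left (hB i _ (by simp [norm_reflv])) (abs_nonneg _)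

lemma tendsto_poissonIntegral (hm : 3 ≤ m) (he : ∀ i, HarmHom k (e i))
    (hw : ContinuousOn w (sphere 0 1)) (hζ₀ : ζ₀ ∈ sphere 0 1) (u : Evec m) :
    Tendsto (fun x => poissonIntegral e (fun ζ => (cmk m k / 2) • w ζ) x u) (𝓝[ball 0 1] ζ₀)
      (𝓝 (∑ i, w ζ₀ i * e i u)) := by
  have he' (i : ι) := (he i).contDiff
  have hcw : ContinuousOn (fun ζ => (cmk m k / 2) • w ζ) (sphere 0 1) := hw.const_smul (cmk m k / 2)
  have hconst : ∀ x ∈ ball (0 : Evec m) 1,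
      poissonIntegral e (fun _ => (cmk m k / 2) • w ζ₀) x u = ∑ i, w ζ₀ i * e i u := fun x hx => by
    rw [← linearCombination_apply_apply,
      ← integral_poissonKer hm (.linearCombination he (w ζ₀)) hx u, ← integral_const_mul]
    refine integral_congr_ae (.of_forall fun ζ => ?_)
    simp only [poissonFamily, map_smul, poissonKer, reflPull, Pi.smul_apply, smul_eq_mul]
    ring
  have hlim := (tendsto_poissonIntegral_zero (by lia) he' (hcw.sub continuousOn_const) hζ₀
    (sub_self _) u).add_const (∑ i, w ζ₀ i * e i u)
  rw [zero_add] at hlim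
  refine hlim.congr' (eventually_mem_nhdsWithin.mono fun x hx => ?_)
  rw [← hconst x hx]
  exact add_eq_of_eq_sub (poissonIntegral_sub he' hcw continuousOn_const hx u)

lemma continuousOn_closedBall_ite {E Y : Type*} [SeminormedAddCommGroup E] [TopologicalSpace Y]
    {f g : E → Y} (hf : ContinuousOn f (ball 0 1)) (hg : ContinuousOn g (sphere 0 1))
    (hfg : ∀ x ∈ sphere (0 : E) 1, Tendsto f (𝓝[ball 0 1] x) (𝓝 (g x))) :
    ContinuousOn (fun x => if ‖x‖ < 1 then f x else g x) (closedBall 0 1) := by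
  have hball : closedBall (0 : E) 1 ∩ {x | ‖x‖ < 1} = ball 0 1 := by
    ext x
    simpa using le_of_lt
  have hsphere : closedBall (0 : E) 1 ∩ {x | ¬‖x‖ < 1} = sphere 0 1 := by
    ext x
    simp [le_antisymm_iff]
  have hfrontier {x : E} (hx : x ∈ closedBall (0 : E) 1 ∩ frontier {x | ‖x‖ < 1}) :
      x ∈ sphere (0 : E) 1 := by
    refine frontier_ball_subset_sphere ?_
    simpa only [ball_zero_eq] using hx.2
  refine .if' (fun x hx => ?_) (fun x hx => ?_) (hball ▸ hf) (hsphere ▸ hg)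
  all_goals rw [if_neg (mem_sphere_zero_iff_norm.1 (hfrontier hx)).not_lt]
  · exact hball ▸ hfg x (hfrontier hx)
  · exact hsphere ▸ hg x (hfrontier hx)

end BoundaryValues

end BosonicPoisson

/-- Dirichlet problem in the unit ball with continuous data:
`𝒟_k P_B[h] = 0`, boundary limits, and continuity up to the boundary. -/
theorem stmt_7 (m k : ℕ) (hm : 3 ≤ m) (hk : 1 ≤ k)
    (Z : Evec m → Evec m → ℝ) (hZ : IsZk m k Z)
    (h : Evec m → Evec m → ℝ)
    (hc : ContinuousOn (fun q : Evec m × Evec m => h q.1 q.2)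
      (sphere (0 : Evec m) 1 ×ˢ closedBall (0 : Evec m) 1))
    (hH : ∀ ζ : Evec m, ‖ζ‖ = 1 → ∃ q, IsHk m k q ∧
      ∀ ω ∈ closedBall (0 : Evec m) 1, h ζ ω = q ω) :
    (∀ x ν : Evec m, ‖x‖ < 1 → ‖ν‖ < 1 → Dk m k (PBint m k Z h) x ν = 0) ∧
    (∀ ζ₀ : Evec m, ‖ζ₀‖ = 1 → ∀ ν : Evec m, ‖ν‖ < 1 →
      Tendsto (fun x => PBint m k Z h x ν) (𝓝[ball (0 : Evec m) 1] ζ₀) (𝓝 (h ζ₀ ν))) ∧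
    (∀ ν : Evec m, ‖ν‖ < 1 →
      ContinuousOn (fun x => if ‖x‖ < 1 then PBint m k Z h x ν else h x ν)
        (closedBall (0 : Evec m) 1)) := by
  obtain ⟨n, v, e, hv, he, hinterp⟩ := BosonicPoisson.exists_interpolation_isHk m k
  have hslice (ν) (hν : ν ∈ closedBall (0 : Evec m) 1) :
      ContinuousOn (fun ζ => h ζ ν) (sphere 0 1) :=
    hc.comp (f := fun ζ => (ζ, ν)) (by fun_prop) fun ζ hζ => ⟨hζ, hν⟩
  have hw : ContinuousOn (fun ζ i => h ζ (v i)) (sphere 0 1) :=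
    continuousOn_pi.2 fun i => hslice _ (hv i)
  have hcw : ContinuousOn (fun ζ => (cmk m k / 2) • fun i => h ζ (v i)) (sphere 0 1) :=
    hw.const_smul (cmk m k / 2)
  rw [hZ.PBint_eq_poissonIntegral (fun ζ hζ => hH ζ (mem_sphere_zero_iff_norm.1 hζ)) hv hinterp]
  have hval (ζ₀ : Evec m) (hζ₀ : ‖ζ₀‖ = 1) (ν : Evec m) (hν : ‖ν‖ < 1) :
      ∑ i, h ζ₀ (v i) * e i ν = h ζ₀ ν := by
    obtain ⟨q, hq, hhq⟩ := hH ζ₀ hζ₀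
    simp only [hhq _ (hv _), hhq ν (mem_closedBall_zero_iff.2 hν.le), hinterp q hq ν]
  have hlim (ζ₀ : Evec m) (hζ₀ : ‖ζ₀‖ = 1) (ν : Evec m) (hν : ‖ν‖ < 1) :=
    hval ζ₀ hζ₀ ν hν ▸
      BosonicPoisson.tendsto_poissonIntegral hm he hw (mem_sphere_zero_iff_norm.2 hζ₀) ν
  refine ⟨fun x ν hx _ => ?_, hlim, fun ν hν => ?_⟩
  · have hmk : 4 < (m : ℝ) + 2 * k := by exact_mod_cast (by lia : 4 < m + 2 * k)
    exact BosonicPoisson.Dk_poissonIntegral hmk he hcw (mem_ball_zero_iff.2 hx) ν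
  · exact BosonicPoisson.continuousOn_closedBall_ite
      (fun x hx => (BosonicPoisson.continuousAt_poissonIntegral (fun i => (he i).contDiff) hcw hx
        ν).continuousWithinAt) (hslice ν (mem_closedBall_zero_iff.2 hν.le))
      fun ζ hζ => hlim ζ (mem_sphere_zero_iff_norm.1 hζ) ν hν
end
end

section
/- Let h : 𝕊^{m-1} × ℝ^m → ℝ be continuous on 𝕊^{m-1} × (closed unit ball), such that for each ζ ∈ 𝕊^{m-1} the function ω ↦ h(ζ,ω) coincides on the closed unit ball with an element of ℋ_k. Then there exists a constant a′_{m,k} > 0 depending only on m and k such that sup_{𝔹^m × 𝔹^m} |P_B[h]| ≤ a′_{m,k} · sup_{𝕊^{m-1} × 𝔹^m} |h|. -/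
noncomputable section

open MeasureTheory Metric Filter Topology
open scoped RealInnerProductSpace

/-!
The factor `Z_k` of the kernel is bounded, because reflections preserve norms, so the theorem
reduces to an `L¹(𝕊^{d-1})` bound on the scalar Poisson kernel `(1 - |x|²) / |x - ζ|^d`, uniform in
`|x| < 1`. Let `δ = 1 - |x|`, so that `1 - |x|² ≤ 2δ`, and let `ρ = |x - ζ| ≥ δ`. Moving a distance
at most `ρ` outwards along the ray through `ζ` changes the distance to `x` by at most `ρ`, so the
integral of `(δ + |x - y|)^{-(d+1)}` along this ray is at least `ρ · (3ρ)^{-(d+1)}`, a multiple of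
`ρ^{-d}`. In polar coordinates, integrating over `ζ` gives at most the integral over the whole
space, which by scaling is a constant times `δ⁻¹`, and this cancels the factor `δ`.
-/

section PolarCoordinates

open Module Set
open scoped ENNReal

variable {E : Type*} [NormedAddCommGroup E] [NormedSpace ℝ E] [FiniteDimensional ℝ E]
  [MeasurableSpace E] [BorelSpace E] (μ : Measure E) [μ.IsAddHaarMeasure]

theorem lintegral_eq_lintegral_toSphere_setLIntegral_Ioi [Nontrivial E] {f : E → ℝ≥0∞}
    (hf : Measurable f) :
    ∫⁻ y, f y ∂μ = ∫⁻ ζ : sphere (0 : E) 1,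
      (∫⁻ r in Ioi (0 : ℝ), ENNReal.ofReal (r ^ (finrank ℝ E - 1)) * f (r • ζ.1)) ∂μ.toSphere := by
  have hpolar : Measurable fun p : sphere (0 : E) 1 × Ioi (0 : ℝ) => f (p.2.1 • p.1.1) :=
    hf.comp (by fun_prop)
  calc ∫⁻ y, f y ∂μ
      = ∫⁻ y : ({0}ᶜ : Set E), f y ∂μ.comap Subtype.val := by
        rw [lintegral_subtype_comap (measurableSet_singleton _).compl, restrict_compl_singleton]
    _ = ∫⁻ p, f (p.2.1 • p.1.1) ∂μ.toSphere.prod (.volumeIoiPow (finrank ℝ E - 1)) := by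
        rw [← μ.measurePreserving_homeomorphUnitSphereProd.lintegral_comp hpolar]
        refine lintegral_congr fun y => ?_
        have hy : ‖y.1‖ ≠ 0 := norm_ne_zero_iff.2 y.2
        simp [smul_smul, hy]
    _ = _ := by
        rw [lintegral_prod _ hpolar.aemeasurable]
        refine lintegral_congr fun ζ => ?_
        rw [Measure.volumeIoiPow, lintegral_withDensity_eq_lintegral_mul _ (by fun_prop)
          (g := fun r : Ioi (0 : ℝ) => f (r.1 • ζ.1)) (hpolar.comp measurable_prodMk_left)]
        exact lintegral_subtype_comap measurableSet_Ioi
          fun r => ENNReal.ofReal (r ^ (finrank ℝ E - 1)) * f (r • ζ.1)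

theorem lintegral_toSphere_setLIntegral_Ioi_one_le {f : E → ℝ≥0∞} (hf : Measurable f) :
    ∫⁻ ζ : sphere (0 : E) 1, (∫⁻ r in Ioi (1 : ℝ), f (r • ζ.1)) ∂μ.toSphere ≤ ∫⁻ y, f y ∂μ := by
  rcases subsingleton_or_nontrivial E with _ | _
  · rw [μ.toSphere_eq_zero_iff.2 ‹_›, lintegral_zero_measure]
    exact zero_le
  rw [lintegral_eq_lintegral_toSphere_setLIntegral_Ioi μ hf]
  refine lintegral_mono fun ζ => ?_
  calc ∫⁻ r in Ioi (1 : ℝ), f (r • ζ.1)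
      ≤ ∫⁻ r in Ioi (1 : ℝ), ENNReal.ofReal (r ^ (finrank ℝ E - 1)) * f (r • ζ.1) := by
        refine setLIntegral_mono' measurableSet_Ioi fun r hr => le_mul_of_one_le_left' ?_
        exact ENNReal.one_le_ofReal.2 (one_le_pow₀ (mem_Ioi.1 hr).le)
    _ ≤ ∫⁻ r in Ioi (0 : ℝ), ENNReal.ofReal (r ^ (finrank ℝ E - 1)) * f (r • ζ.1) :=
        lintegral_mono_set (Ioi_subset_Ioi zero_le_one)

theorem lintegral_comp_smul_addHaar (f : E → ℝ≥0∞) {c : ℝ} (hc : c ≠ 0) :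
    ∫⁻ z, f (c • z) ∂μ = ENNReal.ofReal |(c ^ finrank ℝ E)⁻¹| * ∫⁻ z, f z ∂μ := by
  calc ∫⁻ z, f (c • z) ∂μ = ∫⁻ z, f z ∂μ.map (c • ·) :=
        (lintegral_map_equiv f (Homeomorph.smulOfNeZero c hc).toMeasurableEquiv).symm
    _ = _ := by rw [Measure.map_addHaar_smul μ hc, lintegral_smul_measure, smul_eq_mul]

theorem lintegral_inv_add_norm_pow_lt_top :
    ∫⁻ z, ENNReal.ofReal ((1 + ‖z‖) ^ (finrank ℝ E + 1))⁻¹ ∂μ < ∞ := by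
  have hfin := finite_integral_one_add_norm (μ := μ) (E := E) (r := (finrank ℝ E + 1 : ℕ))
    (by simp)
  refine hfin.trans_eq' (lintegral_congr fun z => ?_)
  rw [Real.rpow_neg (by positivity), Real.rpow_natCast]

theorem lintegral_inv_add_norm_pow {δ : ℝ} (hδ : 0 < δ) :
    ∫⁻ z, ENNReal.ofReal ((δ + ‖z‖) ^ (finrank ℝ E + 1))⁻¹ ∂μ =
      ENNReal.ofReal δ⁻¹ * ∫⁻ z, ENNReal.ofReal ((1 + ‖z‖) ^ (finrank ℝ E + 1))⁻¹ ∂μ := by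
  have hscale (z : E) : ENNReal.ofReal ((δ + ‖z‖) ^ (finrank ℝ E + 1))⁻¹ =
      ENNReal.ofReal (δ ^ (finrank ℝ E + 1))⁻¹ *
        ENNReal.ofReal ((1 + ‖δ⁻¹ • z‖) ^ (finrank ℝ E + 1))⁻¹ := by
    rw [← ENNReal.ofReal_mul (by positivity), ← mul_inv, ← mul_pow, norm_smul,
      Real.norm_of_nonneg (by positivity)]
    congr 3
    field_simp
  simp_rw [hscale]
  rw [lintegral_const_mul' _ _ ENNReal.ofReal_ne_top,
    lintegral_comp_smul_addHaar μ (fun z => ENNReal.ofReal ((1 + ‖z‖) ^ (finrank ℝ E + 1))⁻¹)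
      (inv_ne_zero hδ.ne'),
    ← mul_assoc, ← ENNReal.ofReal_mul (by positivity), abs_of_pos (by positivity), pow_succ]
  congr 2
  rw [inv_pow, inv_inv]
  field_simp

end PolarCoordinates

section ScalarPoissonKernel

open Module Set
open scoped ENNReal

theorem one_sub_norm_sq_div_nonneg {E : Type*} [SeminormedAddCommGroup E] (n : ℕ) {x : E}
    (hx : ‖x‖ ≤ 1) (ζ : E) : 0 ≤ (1 - ‖x‖ ^ 2) / ‖x - ζ‖ ^ n :=
  div_nonneg (sub_nonneg.2 (pow_le_one₀ (norm_nonneg x) hx)) (by positivity)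

section Seminormed

variable {E : Type*} [SeminormedAddCommGroup E] [NormedSpace ℝ E]

theorem norm_sub_smul_le_of_norm_eq_one (x : E) {ζ : E} (hζ : ‖ζ‖ = 1) {r : ℝ} (hr : 1 ≤ r) :
    ‖x - r • ζ‖ ≤ ‖x - ζ‖ + (r - 1) :=
  calc ‖x - r • ζ‖ = ‖(x - ζ) - (r - 1) • ζ‖ := by congr 1; module
    _ ≤ ‖x - ζ‖ + ‖(r - 1) • ζ‖ := norm_sub_le _ _
    _ = ‖x - ζ‖ + (r - 1) := by
      rw [norm_smul, hζ, mul_one, Real.norm_of_nonneg (sub_nonneg.2 hr)]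

theorem ofReal_inv_norm_sub_pow_le_setLIntegral_Ioi_one (n : ℕ) {x ζ : E} (hζ : ‖ζ‖ = 1) {δ : ℝ}
    (hδ : 0 < δ) (hδx : δ ≤ ‖x - ζ‖) :
    ENNReal.ofReal (‖x - ζ‖ ^ n)⁻¹ ≤ ENNReal.ofReal (3 ^ (n + 1)) *
      ∫⁻ r in Ioi (1 : ℝ), ENNReal.ofReal ((δ + ‖x - r • ζ‖) ^ (n + 1))⁻¹ := by
  set ρ := ‖x - ζ‖
  have hρ : 0 < ρ := hδ.trans_le hδx
  have hbound (r : ℝ) (hr : r ∈ Ioc 1 (1 + ρ)) : δ + ‖x - r • ζ‖ ≤ 3 * ρ := by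
    linarith [norm_sub_smul_le_of_norm_eq_one x hζ hr.1.le, hr.2]
  calc ENNReal.ofReal (ρ ^ n)⁻¹
      = ENNReal.ofReal (3 ^ (n + 1)) *
          ∫⁻ _ in Ioc 1 (1 + ρ), ENNReal.ofReal ((3 * ρ) ^ (n + 1))⁻¹ := by
        rw [setLIntegral_const, Real.volume_Ioc, ← ENNReal.ofReal_mul (by positivity),
          ← ENNReal.ofReal_mul (by positivity)]
        congr 1
        field_simp
        ring
    _ ≤ ENNReal.ofReal (3 ^ (n + 1)) *
          ∫⁻ r in Ioc 1 (1 + ρ), ENNReal.ofReal ((δ + ‖x - r • ζ‖) ^ (n + 1))⁻¹ := by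
        refine mul_le_mul_right (setLIntegral_mono' measurableSet_Ioc fun r hr => ?_) _
        grw [hbound r hr]
    _ ≤ ENNReal.ofReal (3 ^ (n + 1)) *
          ∫⁻ r in Ioi (1 : ℝ), ENNReal.ofReal ((δ + ‖x - r • ζ‖) ^ (n + 1))⁻¹ := by
        gcongr
        exact fun r hr => hr.1

end Seminormed

variable {E : Type*} [NormedAddCommGroup E] [NormedSpace ℝ E] [FiniteDimensional ℝ E]
  [MeasurableSpace E] [BorelSpace E] (μ : Measure E) [μ.IsAddHaarMeasure]

theorem lintegral_toSphere_inv_norm_sub_pow_le {x : E} {δ : ℝ} (hδ : 0 < δ)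
    (hδx : ∀ ζ : sphere (0 : E) 1, δ ≤ ‖x - ζ‖) :
    ∫⁻ ζ : sphere (0 : E) 1, ENNReal.ofReal (‖x - ζ‖ ^ finrank ℝ E)⁻¹ ∂μ.toSphere ≤
      ENNReal.ofReal (3 ^ (finrank ℝ E + 1)) * (ENNReal.ofReal δ⁻¹ *
        ∫⁻ z, ENNReal.ofReal ((1 + ‖z‖) ^ (finrank ℝ E + 1))⁻¹ ∂μ) := by
  set d := finrank ℝ E
  let f (z : E) : ℝ≥0∞ := ENNReal.ofReal ((δ + ‖z‖) ^ (d + 1))⁻¹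
  have hf : Measurable f := by fun_prop
  calc ∫⁻ ζ : sphere (0 : E) 1, ENNReal.ofReal (‖x - ζ‖ ^ d)⁻¹ ∂μ.toSphere
      ≤ ENNReal.ofReal (3 ^ (d + 1)) *
          ∫⁻ ζ : sphere (0 : E) 1, (∫⁻ r in Ioi (1 : ℝ), f (x - r • ζ.1)) ∂μ.toSphere := by
        rw [← lintegral_const_mul' _ _ ENNReal.ofReal_ne_top]
        exact lintegral_mono fun ζ =>
          ofReal_inv_norm_sub_pow_le_setLIntegral_Ioi_one d (norm_eq_of_mem_sphere ζ) hδ (hδx ζ)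
    _ ≤ ENNReal.ofReal (3 ^ (d + 1)) * ∫⁻ y, f (x - y) ∂μ := by
        gcongr
        exact lintegral_toSphere_setLIntegral_Ioi_one_le μ (f := fun y => f (x - y))
          (hf.comp (by fun_prop))
    _ = _ := by rw [lintegral_sub_left_eq_self, lintegral_inv_add_norm_pow μ hδ]

theorem lintegral_toSphere_poisson_le {x : E} (hx : ‖x‖ < 1) :
    ∫⁻ ζ : sphere (0 : E) 1,
        ENNReal.ofReal ((1 - ‖x‖ ^ 2) / ‖x - ζ‖ ^ finrank ℝ E) ∂μ.toSphere ≤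
      2 * ENNReal.ofReal (3 ^ (finrank ℝ E + 1)) *
        ∫⁻ z, ENNReal.ofReal ((1 + ‖z‖) ^ (finrank ℝ E + 1))⁻¹ ∂μ := by
  set d := finrank ℝ E
  set K := ∫⁻ z, ENNReal.ofReal ((1 + ‖z‖) ^ (d + 1))⁻¹ ∂μ
  set δ := 1 - ‖x‖
  have hδ : 0 < δ := sub_pos.2 hx
  have hδx (ζ : sphere (0 : E) 1) : δ ≤ ‖x - ζ‖ := by
    simpa only [norm_eq_of_mem_sphere ζ, norm_sub_rev ζ.1 x] using norm_sub_norm_le ζ.1 x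
  have hnum : 1 - ‖x‖ ^ 2 ≤ 2 * δ := by nlinarith [norm_nonneg x]
  calc ∫⁻ ζ : sphere (0 : E) 1, ENNReal.ofReal ((1 - ‖x‖ ^ 2) / ‖x - ζ‖ ^ d) ∂μ.toSphere
      ≤ ENNReal.ofReal (2 * δ) *
          ∫⁻ ζ : sphere (0 : E) 1, ENNReal.ofReal (‖x - ζ‖ ^ d)⁻¹ ∂μ.toSphere := by
        rw [← lintegral_const_mul' _ _ ENNReal.ofReal_ne_top]
        gcongr with ζ
        rw [← ENNReal.ofReal_mul (by positivity), div_eq_mul_inv]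
        gcongr
    _ ≤ ENNReal.ofReal (2 * δ) *
          (ENNReal.ofReal (3 ^ (d + 1)) * (ENNReal.ofReal δ⁻¹ * K)) := by
        gcongr
        exact lintegral_toSphere_inv_norm_sub_pow_le μ hδ hδx
    _ = 2 * ENNReal.ofReal (3 ^ (d + 1)) * K * (ENNReal.ofReal δ * ENNReal.ofReal δ⁻¹) := by
        rw [ENNReal.ofReal_mul zero_le_two, ENNReal.ofReal_ofNat]
        ring
    _ = 2 * ENNReal.ofReal (3 ^ (d + 1)) * K := by
        rw [← ENNReal.ofReal_mul hδ.le, mul_inv_cancel₀ hδ.ne', ENNReal.ofReal_one, mul_one]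

end ScalarPoissonKernel

section PoissonIntegral

open scoped ENNReal NNReal

variable {m k : ℕ}

theorem reflv_eq_reflection (a u : Evec m) : reflv a u = (ℝ ∙ a)ᗮ.reflection u := by
  rw [Submodule.reflection_orthogonal_apply, Submodule.reflection_singleton_apply, reflv, neg_sub,
    two_nsmul, ← add_smul, ← two_mul, mul_div_assoc]
  rfl

theorem norm_reflv (a u : Evec m) : ‖reflv a u‖ = ‖u‖ := by
  rw [reflv_eq_reflection, LinearIsometryEquiv.norm_map]

instance : IsFiniteMeasure (sphereM m) :=
  inferInstanceAs (IsFiniteMeasure (Measure.map _ _))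

theorem ae_sphereM_norm_eq_one (m : ℕ) : ∀ᵐ ζ ∂sphereM m, ‖ζ‖ = 1 := by
  rw [sphereM, ae_map_iff measurable_subtype_coe.aemeasurable
    (measurableSet_eq_fun (by fun_prop) (by fun_prop))]
  exact Eventually.of_forall norm_eq_of_mem_sphere

theorem exists_lintegral_sphereM_poisson_le (m : ℕ) :
    ∃ C : ℝ≥0, ∀ x : Evec m, ‖x‖ < 1 →
      ∫⁻ ζ, ENNReal.ofReal ((1 - ‖x‖ ^ 2) / ‖x - ζ‖ ^ m) ∂sphereM m ≤ C := by
  have hfin : 2 * ENNReal.ofReal (3 ^ (m + 1)) *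
      ∫⁻ z : Evec m, ENNReal.ofReal ((1 + ‖z‖) ^ (m + 1))⁻¹ < ∞ :=
    ENNReal.mul_lt_top (ENNReal.mul_lt_top (by simp) ENNReal.ofReal_lt_top)
      (by simpa only [finrank_euclideanSpace_fin] using
        lintegral_inv_add_norm_pow_lt_top (volume : Measure (Evec m)))
  refine ⟨_, fun x hx => le_of_le_of_eq ?_ (ENNReal.coe_toNNReal hfin.ne).symm⟩
  rw [sphereM, lintegral_map (by fun_prop) measurable_subtype_coe]
  simpa only [finrank_euclideanSpace_fin] using lintegral_toSphere_poisson_le volume hx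

variable {Z : Evec m → Evec m → ℝ} {D : ℝ}

theorem abs_PB_le (hZ : ∀ u v, ‖u‖ = 1 → ‖v‖ ≤ 1 → |Z u v| ≤ D) {x ζ ω ν : Evec m}
    (hx : ‖x‖ ≤ 1) (hω : ‖ω‖ = 1) (hν : ‖ν‖ ≤ 1) :
    |PB m k Z x ζ ω ν| ≤ (1 - ‖x‖ ^ 2) / ‖x - ζ‖ ^ m * (|cmk m k / 2| * D) := by
  have hpoisson := one_sub_norm_sq_div_nonneg m hx ζ
  calc |PB m k Z x ζ ω ν|
      = (1 - ‖x‖ ^ 2) / ‖x - ζ‖ ^ m * (|cmk m k / 2| * |Z (reflv (x - ζ) ω) ν|) := by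
        rw [PB, abs_mul, abs_mul, abs_of_nonneg hpoisson]
        ring
    _ ≤ (1 - ‖x‖ ^ 2) / ‖x - ζ‖ ^ m * (|cmk m k / 2| * D) := by
        gcongr
        exact hZ _ _ ((norm_reflv _ _).trans hω) hν

theorem enorm_PB_mul_le (hZ : ∀ u v, ‖u‖ = 1 → ‖v‖ ≤ 1 → |Z u v| ≤ D) {x ζ ω ν : Evec m}
    (hx : ‖x‖ ≤ 1) (hω : ‖ω‖ = 1) (hν : ‖ν‖ ≤ 1) {t M : ℝ} (ht : |t| ≤ M) :
    ‖PB m k Z x ζ ω ν * t‖ₑ ≤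
      ENNReal.ofReal ((1 - ‖x‖ ^ 2) / ‖x - ζ‖ ^ m) * ENNReal.ofReal (|cmk m k / 2| * D * M) := by
  have hpoisson := one_sub_norm_sq_div_nonneg m hx ζ
  have hPB := abs_PB_le (k := k) (ζ := ζ) hZ hx hω hν
  rw [← ENNReal.ofReal_mul hpoisson, Real.enorm_eq_ofReal_abs, abs_mul, ← mul_assoc]
  exact ENNReal.ofReal_le_ofReal (mul_le_mul hPB ht (abs_nonneg t) ((abs_nonneg _).trans hPB))

theorem lintegral_lintegral_enorm_PB_mul_le (hZ : ∀ u v, ‖u‖ = 1 → ‖v‖ ≤ 1 → |Z u v| ≤ D)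
    {h : Evec m → Evec m → ℝ} {M : ℝ} (hM : ∀ ζ ω, ‖ζ‖ = 1 → ‖ω‖ = 1 → |h ζ ω| ≤ M)
    {x ν : Evec m} (hx : ‖x‖ ≤ 1) (hν : ‖ν‖ ≤ 1) :
    ∫⁻ ζ, ∫⁻ ω, ‖PB m k Z x ζ ω ν * h ζ ω‖ₑ ∂sphereM m ∂sphereM m ≤
      (∫⁻ ζ, ENNReal.ofReal ((1 - ‖x‖ ^ 2) / ‖x - ζ‖ ^ m) ∂sphereM m) *
        (ENNReal.ofReal (|cmk m k / 2| * D * M) * ENNReal.ofReal (omegaS m)) := by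
  rw [omegaS, ENNReal.ofReal_toReal (measure_ne_top _ _),
    ← lintegral_mul_const _ (by fun_prop)]
  refine lintegral_mono_ae ?_
  filter_upwards [ae_sphereM_norm_eq_one m] with ζ hζ
  rw [← mul_assoc, ← lintegral_const]
  refine lintegral_mono_ae ?_
  filter_upwards [ae_sphereM_norm_eq_one m] with ω hω
  exact enorm_PB_mul_le hZ hx hω hν (hM ζ ω hζ hω)

theorem enorm_PBint_le (h : Evec m → Evec m → ℝ) (x ν : Evec m) :
    ‖PBint m k Z h x ν‖ₑ ≤
      ∫⁻ ζ, ∫⁻ ω, ‖PB m k Z x ζ ω ν * h ζ ω‖ₑ ∂sphereM m ∂sphereM m :=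
  (enorm_integral_le_lintegral_enorm _).trans
    (lintegral_mono fun _ => enorm_integral_le_lintegral_enorm _)

end PoissonIntegral

theorem stmt_8_general (m k : ℕ) (hm : 3 ≤ m) {D : ℝ} (hD : 0 ≤ D) :
    ∃ a : ℝ, 0 < a ∧
      ∀ Z : Evec m → Evec m → ℝ, (∀ u v, ‖u‖ = 1 → ‖v‖ ≤ 1 → |Z u v| ≤ D) →
        ∀ (h : Evec m → Evec m → ℝ) (M : ℝ), (∀ ζ ω, ‖ζ‖ = 1 → ‖ω‖ = 1 → |h ζ ω| ≤ M) →
          ∀ x ν : Evec m, ‖x‖ < 1 → ‖ν‖ ≤ 1 →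
            ∫⁻ ζ, ∫⁻ ω, ‖PB m k Z x ζ ω ν * h ζ ω‖ₑ ∂sphereM m ∂sphereM m ≤
              ENNReal.ofReal (a * M) ∧
            |PBint m k Z h x ν| ≤ a * M := by
  obtain ⟨C, hC⟩ := exists_lintegral_sphereM_poisson_le m
  have h_omega : 0 ≤ omegaS m := ENNReal.toReal_nonneg
  refine ⟨C * (|cmk m k / 2| * D * omegaS m) + 1, by positivity, fun Z hZ h M hM x ν hx hν => ?_⟩
  have : NeZero m := ⟨by lia⟩
  obtain ⟨e, he⟩ := exists_norm_eq (Evec m) zero_le_one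
  have hM₀ : 0 ≤ M := (abs_nonneg _).trans (hM e e he he)
  have habs : ∫⁻ ζ, ∫⁻ ω, ‖PB m k Z x ζ ω ν * h ζ ω‖ₑ ∂sphereM m ∂sphereM m ≤
      ENNReal.ofReal ((C * (|cmk m k / 2| * D * omegaS m) + 1) * M) := by
    grw [lintegral_lintegral_enorm_PB_mul_le hZ hM hx.le hν, hC x hx,
      ← ENNReal.ofReal_mul (by positivity), ← ENNReal.ofReal_coe_nnreal,
      ← ENNReal.ofReal_mul C.coe_nonneg]
    refine ENNReal.ofReal_le_ofReal ?_
    linarith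
  refine ⟨habs, ?_⟩
  rw [← ENNReal.ofReal_le_ofReal_iff (by positivity), ← Real.enorm_eq_ofReal_abs]
  exact (enorm_PBint_le h x ν).trans habs

/-- sup-norm bound for the unit-ball Poisson integral, with a constant
depending only on `m` and `k`. -/
theorem stmt_8 (m k : ℕ) (hm : 3 ≤ m) (hk : 1 ≤ k)
    (Z : Evec m → Evec m → ℝ) (hZ : IsZk m k Z) :
    ∃ a : ℝ, 0 < a ∧
      ∀ h : Evec m → Evec m → ℝ,
        ContinuousOn (fun q : Evec m × Evec m => h q.1 q.2)
          (sphere (0 : Evec m) 1 ×ˢ closedBall (0 : Evec m) 1) →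
        (∀ ζ : Evec m, ‖ζ‖ = 1 → ∃ q, IsHk m k q ∧
          ∀ ω ∈ closedBall (0 : Evec m) 1, h ζ ω = q ω) →
        ∀ M : ℝ, (∀ ζ ω : Evec m, ‖ζ‖ = 1 → ‖ω‖ ≤ 1 → |h ζ ω| ≤ M) →
          ∀ x ν : Evec m, ‖x‖ < 1 → ‖ν‖ < 1 → |PBint m k Z h x ν| ≤ a * M := by
  obtain ⟨a, ha, hbound⟩ := stmt_8_general m k hm (hdim m k).cast_nonneg
  exact ⟨a, ha, fun h _ _ M hM x ν hx hν => (hbound Z (fun u v hu => hZ.2.2.2.1 u v hu.le) h M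
    (fun ζ ω hζ hω => hM ζ ω hζ hω.le) x ν hx hν.le).2⟩
end
end
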